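/- Suppose the kernel K(x) = Ω(x)/|x|ⁿ has odd Ω, and suppose f and φ are measurable functions supported in a cube Q ⊂ ℝⁿ with φ ∈ L^∞(Q) and f ∈ L log L(Q). Then ∫_{ℝⁿ} Tf(x) φ(x) dx = − ∫_{ℝⁿ} f(x) Tφ(x) dx, where both integrals converge absolutely. -/

import Mathlib

/-!
The operators `T_ε` are antisymmetric, `∫ T_ε f φ = -∫ f T_ε φ`, by Fubini's theorem and the oddness
of the truncated kernel (`Tk_antisymm`). The content of the theorem is the passage to the limit
`ε → 0`, for which `φ` may be assumed bounded by `1`.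

The key is a bound uniform in `ε`: for `|φ| ≤ 1` supported in a ball `B` and every `δ > 0`,
`∫_B |u| |T_ε φ| ≤ A (∫_B |u| log⁺(|u| / δ) + c δ)` (`ke_pairing`). It is proved as follows. The
method of rotations (`rotations`) writes `T_ε φ` as an average of truncated Hilbert transforms along
lines. On a line, the truncated Hilbert transform of a function bounded by `1` is within `π` of the
real part of a Cauchy transform `F`, whose imaginary part is bounded by `π`. Integrating `exp (c F)`
over the boundary of a rectangle shows that it is exponentially integrable (`exp_cauchyT_le`,
`exp_hTr_le`). Young's inequality `a b ≤ a log⁺ a + exp b` then gives the bound. By duality and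
antisymmetry, `∫_B |T_ε u|` is controlled by the same modular (`ke_op`). The parameter `δ` makes the
right-hand side small for the unbounded part of an `L log L` function (`LL.exists_trunc`).

To obtain convergence, compare `T_ε f` with the mollification at scale `ε` of `T_δ f`, `δ ≤ ε`. The
difference of the two kernels is dominated by an integrable bell-shaped weight at scale `ε`
(`eta_bd`), so the difference of the two functions is at most a multiple of the mean oscillation of
`f` at scale `ε` (`Tk_sub_le`), which tends to zero at almost every point (`tendsto_Dosc`). For
bounded `f` this and `ke_op` give the Cauchy property in `L¹(B)` (`Tk_cauchy_bdd`), and the uniform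
bound extends it to `L log L` (`Tk_cauchy`). Let `g` be the `L¹` limit. Letting `δ → 0`, `T_ε f` is
within the mean oscillation of `f` of the mollification of `g`, so `T_ε f → g` almost everywhere on
`B` (`Tk_tendsto_ae`) and the principal value equals `g` there.

Finally (`pairing_limits`), `∫ T_ε f φ → ∫ g φ` because `φ` is bounded, and `∫ f T_ε φ` converges
because the unbounded part of `f` contributes little uniformly in `ε`, while on the bounded part
`T_ε φ` converges in `L¹`.
-/

open MeasureTheory ENNReal Filter Set Topology

noncomputable section

namespace VarExp

/-- Euclidean space ℝⁿ. -/
abbrev E (n : ℕ) := EuclideanSpace ℝ (Fin n)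

/-- An axis-parallel cube in ℝⁿ. -/
def IsCube {n : ℕ} (Q : Set (E n)) : Prop :=
  ∃ (a : E n) (h : ℝ), 0 < h ∧ Q = {x : E n | ∀ i, a i ≤ x i ∧ x i ≤ a i + h}

/-- The average of `f` over a set `Q` (w.r.t. Lebesgue measure). -/
def cubeAvg {n : ℕ} (Q : Set (E n)) (f : E n → ℝ) : ℝ :=
  (volume Q).toReal⁻¹ * ∫ x in Q, f x

/-- The BMO seminorm `‖b‖_* = sup_Q |Q|⁻¹ ∫_Q |b - b_Q|`. -/
def bmoNorm {n : ℕ} (b : E n → ℝ) : ℝ≥0∞ :=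
  ⨆ (Q : Set (E n)) (_ : IsCube Q),
    (∫⁻ x in Q, ENNReal.ofReal |b x - cubeAvg Q b|) / volume Q

/-- `b ∈ BMO(ℝⁿ)`. -/
def MemBMO {n : ℕ} (b : E n → ℝ) : Prop :=
  LocallyIntegrable b volume ∧ bmoNorm b < ⊤

/-- Hardy-Littlewood maximal function (over axis-parallel cubes) of an
`ℝ≥0∞`-valued function. -/
def emaximal {n : ℕ} (f : E n → ℝ≥0∞) (x : E n) : ℝ≥0∞ :=
  ⨆ (Q : Set (E n)) (_ : IsCube Q ∧ x ∈ Q), (∫⁻ y in Q, f y) / volume Q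

/-- Hardy-Littlewood maximal function of a real function. -/
def maximal {n : ℕ} (f : E n → ℝ) : E n → ℝ≥0∞ :=
  emaximal (fun y => ENNReal.ofReal |f y|)

/-- Luxemburg-Nakano norm of an `ℝ≥0∞`-valued function for a variable exponent `p`. -/
def eLux {n : ℕ} (p : E n → ℝ) (f : E n → ℝ≥0∞) : ℝ≥0∞ :=
  sInf {lam : ℝ≥0∞ | lam ≠ 0 ∧ ∫⁻ x, (f x / lam) ^ (p x) ≤ 1}

/-- Luxemburg-Nakano norm `‖f‖_{L^{p(·)}}` of a real function. -/
def vNorm {n : ℕ} (p : E n → ℝ) (f : E n → ℝ) : ℝ≥0∞ :=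
  eLux p (fun x => ENNReal.ofReal |f x|)

/-- Membership `f ∈ L^{p(·)}(ℝⁿ)`: the modular of `λf` is finite for some `λ > 0`. -/
def MemVarLp {n : ℕ} (p : E n → ℝ) (f : E n → ℝ) : Prop :=
  AEStronglyMeasurable f volume ∧
    ∃ lam : ℝ, 0 < lam ∧ ∫⁻ x, (ENNReal.ofReal (lam * |f x|)) ^ (p x) < ⊤

/-- Condition (*): `p` measurable, `1 ≤ p`, `1 < p_- := essinf p` and
`p_+ := esssup p < ∞` (i.e. `p` essentially bounded above). -/
def GoodExp {n : ℕ} (p : E n → ℝ) : Prop :=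
  Measurable p ∧ (∀ x, 1 ≤ p x) ∧ 1 < essInf p volume ∧
    ∃ B : ℝ, ∀ᵐ x ∂(volume : Measure (E n)), p x ≤ B

/-- The constant `r_p := 1 + 1/p_- - 1/p_+`. -/
def rp {n : ℕ} (p : E n → ℝ) : ℝ :=
  1 + (essInf p volume)⁻¹ - (essSup p volume)⁻¹

/-- The conjugate exponent `p'(x) = p(x)/(p(x)-1)`. -/
def conjExp {n : ℕ} (p : E n → ℝ) : E n → ℝ := fun x => p x / (p x - 1)

/-- The class `𝓜(ℝⁿ)`: `p` satisfies (*) and the Hardy-Littlewood maximal operator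
is bounded on `L^{p(·)}(ℝⁿ)`. -/
def MemClassM {n : ℕ} (p : E n → ℝ) : Prop :=
  GoodExp p ∧ ∃ c : ℝ≥0∞, c ≠ ⊤ ∧ ∀ f : E n → ℝ, AEStronglyMeasurable f volume →
    eLux p (maximal f) ≤ c * vNorm p f

/-- Bounded measurable functions with compact support. -/
def MemLinftyC {n : ℕ} (f : E n → ℝ) : Prop :=
  Measurable f ∧ (∃ C : ℝ, ∀ x, |f x| ≤ C) ∧ HasCompactSupport f

/-- The Calderón-Zygmund kernel data: `Ω` is homogeneous of degree zero, infinitely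
differentiable away from the origin (equivalently, on the unit sphere), and has
mean value zero over the unit sphere (expressed, via homogeneity, as mean zero
over the annulus `1 ≤ ‖x‖ ≤ 2`). -/
structure IsCZKernel {n : ℕ} (Ω : E n → ℝ) : Prop where
  hom : ∀ (x : E n) (t : ℝ), 0 < t → Ω (t • x) = Ω x
  smooth : ContDiffOn ℝ (⊤ : ℕ∞) Ω {x : E n | x ≠ 0}
  mean : ∫ x in {x : E n | 1 ≤ ‖x‖ ∧ ‖x‖ ≤ 2}, Ω x = 0

/-- The kernel `K(x) = Ω(x)/|x|ⁿ`. -/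
def kernelFn {n : ℕ} (Ω : E n → ℝ) : E n → ℝ := fun x => Ω x / ‖x‖ ^ n

/-- The truncated kernel `K_ε = K·χ_{|y|>ε}`. -/
def kernelEps {n : ℕ} (Ω : E n → ℝ) (ε : ℝ) : E n → ℝ :=
  fun y => if ε < ‖y‖ then kernelFn Ω y else 0

/-- The truncated singular integral `T_ε f(x) = ∫_{|y|>ε} K(y) f(x-y) dy`. -/
def Teps {n : ℕ} (Ω : E n → ℝ) (ε : ℝ) (f : E n → ℝ) (x : E n) : ℝ :=
  ∫ y in {y : E n | ε < ‖y‖}, kernelFn Ω y * f (x - y)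

/-- The principal value singular integral `T f(x) = lim_{ε→0⁺} T_ε f(x)`. -/
def Tsing {n : ℕ} (Ω : E n → ℝ) (f : E n → ℝ) (x : E n) : ℝ :=
  limUnder (𝓝[>] (0 : ℝ)) (fun ε => Teps Ω ε f x)

/-- The commutator `[b,T]f = b·Tf - T(bf)`. -/
def commutator {n : ℕ} (b : E n → ℝ) (Ω : E n → ℝ) (f : E n → ℝ) : E n → ℝ :=
  fun x => b x * Tsing Ω f x - Tsing Ω (fun y => b y * f y) x

/-- The non-increasing rearrangement `f^*(t)` (ℝ≥0∞-valued, `t ∈ ℝ≥0∞`). -/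
def rearr {n : ℕ} (f : E n → ℝ) (t : ℝ≥0∞) : ℝ≥0∞ :=
  sInf {α : ℝ≥0∞ | volume {x : E n | α < ENNReal.ofReal |f x|} ≤ t}

/-- The local sharp maximal function
`M_λ^# f(x) = sup_{Q ∋ x} inf_c ((f-c)χ_Q)^*(λ|Q|)`. -/
def localSharp {n : ℕ} (lam : ℝ) (f : E n → ℝ) (x : E n) : ℝ≥0∞ :=
  ⨆ (Q : Set (E n)) (_ : IsCube Q ∧ x ∈ Q),
    ⨅ c : ℝ, rearr (Q.indicator (fun y => f y - c)) (ENNReal.ofReal lam * volume Q)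

/-- The sharp maximal function
`f_δ^#(x) = sup_{Q ∋ x} inf_c (|Q|⁻¹ ∫_Q |f-c|^δ)^{1/δ}`. -/
def sharpDelta {n : ℕ} (δ : ℝ) (f : E n → ℝ) (x : E n) : ℝ≥0∞ :=
  ⨆ (Q : Set (E n)) (_ : IsCube Q ∧ x ∈ Q),
    ⨅ c : ℝ, ((∫⁻ y in Q, ENNReal.ofReal (|f y - c| ^ δ)) / volume Q) ^ (1 / δ)

/-- `f ∈ L^δ_loc(ℝⁿ)` (local δ-integrability over cubes). -/
def MemLdeltaLoc {n : ℕ} (δ : ℝ) (f : E n → ℝ) : Prop :=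
  AEStronglyMeasurable f volume ∧
    ∀ Q : Set (E n), IsCube Q → ∫⁻ y in Q, ENNReal.ofReal (|f y| ^ δ) < ⊤

/-- `f ∈ L log L(Q)`: `∫_Q |f| log⁺|f| < ∞`. -/
def MemLlogL {n : ℕ} (Q : Set (E n)) (f : E n → ℝ) : Prop :=
  AEStronglyMeasurable f volume ∧
    ∫⁻ x in Q, ENNReal.ofReal (|f x| * Real.log (max |f x| 1)) < ⊤

/-- `g ∈ L_exp(Q)`: `∫_Q exp(λ|g|) < ∞` for some `λ > 0`. -/
def MemLexp {n : ℕ} (Q : Set (E n)) (g : E n → ℝ) : Prop :=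
  AEStronglyMeasurable g volume ∧
    ∃ lam : ℝ, 0 < lam ∧ ∫⁻ x in Q, ENNReal.ofReal (Real.exp (lam * |g x|)) < ⊤

/-- `f^{**}(t) = t⁻¹ ∫_0^t f^*(s) ds`. -/
def starStar {n : ℕ} (f : E n → ℝ) (t : ℝ) : ℝ≥0∞ :=
  (∫⁻ s in Set.Ioc (0 : ℝ) t, rearr f (ENNReal.ofReal s)) / ENNReal.ofReal t

/-- The Zygmund norm `‖f‖_{L log L(Q)} = ∫_0^{|Q|} (fχ_Q)^{**}(t) dt`. -/
def llogLNorm {n : ℕ} (Q : Set (E n)) (f : E n → ℝ) : ℝ≥0∞ :=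
  ∫⁻ t in Set.Ioc (0 : ℝ) (volume Q).toReal, starStar (Q.indicator f) t

/-- The norm `‖g‖_{L_exp(Q)} = sup_{0<t<|Q|} g^{**}(t)/(1 + log(|Q|/t))`. -/
def lexpNorm {n : ℕ} (Q : Set (E n)) (g : E n → ℝ) : ℝ≥0∞ :=
  ⨆ (t : ℝ) (_ : t ∈ Set.Ioo (0 : ℝ) (volume Q).toReal),
    starStar (Q.indicator g) t / ENNReal.ofReal (1 + Real.log ((volume Q).toReal / t))

/-- The Orlicz-type norm `‖f‖⁰ = sup {∫ |fg| : ‖g‖_{L^{p'(·)}} ≤ 1}`. -/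
def orliczNorm {n : ℕ} (p : E n → ℝ) (f : E n → ℝ) : ℝ≥0∞ :=
  ⨆ (g : E n → ℝ) (_ : MemVarLp (conjExp p) g ∧ vNorm (conjExp p) g ≤ 1),
    ∫⁻ x, ENNReal.ofReal |f x * g x|

/-- The associate (Köthe dual) norm of `L^{p(·)}`:
`‖g‖' = sup {∫ |gh| : ‖h‖_{L^{p(·)}} ≤ 1}`. -/
def assocNorm {n : ℕ} (p : E n → ℝ) (g : E n → ℝ) : ℝ≥0∞ :=
  ⨆ (h : E n → ℝ) (_ : MemVarLp p h ∧ vNorm p h ≤ 1),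
    ∫⁻ x, ENNReal.ofReal |g x * h x|

/-! ### Cauchy transforms and Zygmund's exponential estimate -/

section
/-- The Cauchy transform `z ↦ ∫ g(t)/(z - t) dt` of a density `g` on the line. -/
def cauchyT (g : ℝ → ℝ) (z : ℂ) : ℂ := ∫ t, (g t : ℂ) / (z - t)

lemma integrable_of_bdd_supp {α : Type*} [MeasurableSpace α] {μ : Measure α} {F : Type*}
    [NormedAddCommGroup F] {f : α → F} (hf : AEStronglyMeasurable f μ) {C : ℝ}
    (hC : ∀ x, ‖f x‖ ≤ C) {s : Set α} (hs : MeasurableSet s) (hμ : μ s < ⊤)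
    (hsupp : ∀ x ∉ s, f x = 0) : Integrable f μ := by
  have h1 : IntegrableOn f s μ := by
    have : IsFiniteMeasure (μ.restrict s) := ⟨by simpa using hμ⟩
    exact Integrable.of_bound hf.restrict C (ae_of_all _ hC)
  have h2 : s.indicator f = f := by
    ext x; by_cases hx : x ∈ s <;> simp [hx, hsupp]
  rw [← h2]; exact h1.integrable_indicator hs

lemma g_integrable {g : ℝ → ℝ} (hg : Measurable g) (hb : ∀ t, |g t| ≤ 1) {a : ℝ}
    (hs : ∀ t, a < |t| → g t = 0) : Integrable g :=
  integrable_of_bdd_supp hg.aestronglyMeasurable hb (s := Icc (-a) a) measurableSet_Icc (by simp)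
    (fun x hx => hs x (by by_contra h; exact hx (abs_le.1 (not_lt.1 h))))

lemma im_le_norm_sub {z : ℂ} (t : ℝ) : z.im ≤ ‖z - t‖ := by
  have := Complex.abs_im_le_norm (z - t)
  simp only [Complex.sub_im, Complex.ofReal_im, sub_zero] at this
  exact (le_abs_self _).trans this

lemma cauchyT_integrable {g : ℝ → ℝ} (hg : Measurable g) (hb : ∀ t, |g t| ≤ 1) {a : ℝ}
    (hs : ∀ t, a < |t| → g t = 0) {z : ℂ} (hz : 0 < z.im) :
    Integrable (fun t : ℝ => (g t : ℂ) / (z - t)) := by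
  refine integrable_of_bdd_supp (C := 1 / z.im) (s := Icc (-a) a) ?_ ?_ measurableSet_Icc
    (by simp) ?_
  · exact (Measurable.div (by fun_prop) (by fun_prop)).aestronglyMeasurable
  · intro t
    rw [norm_div, Complex.norm_real, Real.norm_eq_abs]
    exact div_le_div₀ zero_le_one (hb t) hz (im_le_norm_sub t)
  · intro x hx
    rw [hs x (by by_contra h; exact hx (abs_le.1 (not_lt.1 h)))]; simp

lemma cauchyT_hasDerivAt {g : ℝ → ℝ} (hg : Measurable g) (hb : ∀ t, |g t| ≤ 1) {a : ℝ}
    (hs : ∀ t, a < |t| → g t = 0) {z : ℂ} (hz : 0 < z.im) :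
    DifferentiableAt ℂ (cauchyT g) z := by
  have hball : ∀ w ∈ Metric.ball z (z.im / 2), z.im / 2 < w.im := by
    intro w hw
    have h1 : |(w - z).im| < z.im / 2 :=
      (Complex.abs_im_le_norm _).trans_lt (by simpa [dist_eq_norm] using hw)
    rw [Complex.sub_im, abs_lt] at h1
    linarith
  have key := hasDerivAt_integral_of_dominated_loc_of_deriv_le (𝕜 := ℂ) (μ := (volume : Measure ℝ))
    (F := fun (w : ℂ) (t : ℝ) => (g t : ℂ) / (w - t))
    (F' := fun (w : ℂ) (t : ℝ) => -(g t : ℂ) / (w - t) ^ 2) (x₀ := z)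
    (s := Metric.ball z (z.im / 2))
    (bound := fun t => |g t| / (z.im / 2) ^ 2) (Metric.ball_mem_nhds z (by positivity)) ?_
    (cauchyT_integrable hg hb hs hz) ?_ ?_ ?_ ?_
  · exact key.2.differentiableAt
  · exact Eventually.of_forall fun w =>
      (Measurable.div (by fun_prop) (by fun_prop)).aestronglyMeasurable
  · exact (Measurable.div (by fun_prop) (by fun_prop)).aestronglyMeasurable
  · refine ae_of_all _ fun t w hw => ?_
    have h1 := hball w hw
    have h2 := im_le_norm_sub (z := w) t
    rw [norm_div, norm_neg, Complex.norm_real, Real.norm_eq_abs, norm_pow]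
    gcongr
    linarith
  · exact (g_integrable hg hb hs).abs.div_const _
  · refine ae_of_all _ fun t w hw => ?_
    have h1 := hball w hw
    have hne : w - (t : ℂ) ≠ 0 := by
      have h2 := im_le_norm_sub (z := w) t
      exact norm_pos_iff.1 (by linarith)
    have := (hasDerivAt_const w (g t : ℂ)).div ((hasDerivAt_id w).sub_const (t : ℂ)) hne
    have h3 : -(g t : ℂ) / (w - t) ^ 2 = (0 * (w - t) - g t * 1) / (w - t) ^ 2 := by simp
    change HasDerivAt (fun w : ℂ => (g t : ℂ) / (w - t)) (-(g t : ℂ) / (w - t) ^ 2) w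
    rw [h3]; exact this

lemma norm_cauchyT_le {g : ℝ → ℝ} (hb : ∀ t, |g t| ≤ 1) {a : ℝ} (ha : 0 < a)
    (hs : ∀ t, a < |t| → g t = 0) {z : ℂ} {d : ℝ} (hd : 0 < d)
    (h : ∀ t : ℝ, |t| ≤ a → d ≤ ‖z - t‖) : ‖cauchyT g z‖ ≤ 2 * a / d := by
  have h1 : cauchyT g z = ∫ t in Icc (-a) a, (g t : ℂ) / (z - t) := by
    rw [setIntegral_eq_integral_of_forall_compl_eq_zero]
    · rfl
    intro x hx
    rw [hs x (by by_contra h; exact hx (abs_le.1 (not_lt.1 h)))]; simp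
  rw [h1]
  refine (norm_setIntegral_le_of_norm_le_const (C := 1 / d) (by simp) ?_).trans ?_
  · intro t ht
    rw [norm_div, Complex.norm_real, Real.norm_eq_abs]
    exact div_le_div₀ zero_le_one (hb t) hd (h t (abs_le.2 ht))
  · rw [measureReal_def, Real.volume_Icc, ENNReal.toReal_ofReal (by linarith)]
    apply le_of_eq; ring

lemma cauchyT_re {g : ℝ → ℝ} (hg : Measurable g) (hb : ∀ t, |g t| ≤ 1) {a : ℝ}
    (hs : ∀ t, a < |t| → g t = 0) {x ε : ℝ} (hε : 0 < ε) :
    (cauchyT g (x + ε * Complex.I)).re = ∫ t, g t * ((x - t) / ((x - t) ^ 2 + ε ^ 2)) := by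
  have hi := cauchyT_integrable hg hb hs (z := x + ε * Complex.I) (by simpa using hε)
  have := integral_re hi
  simp only [RCLike.re_eq_complex_re] at this
  rw [cauchyT, ← this]
  congr 1; ext t
  rw [Complex.div_re]
  simp [Complex.normSq_apply]
  ring_nf

lemma cauchyT_im {g : ℝ → ℝ} (hg : Measurable g) (hb : ∀ t, |g t| ≤ 1) {a : ℝ}
    (hs : ∀ t, a < |t| → g t = 0) {x ε : ℝ} (hε : 0 < ε) :
    (cauchyT g (x + ε * Complex.I)).im = - ∫ t, g t * (ε / ((x - t) ^ 2 + ε ^ 2)) := by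
  have hi := cauchyT_integrable hg hb hs (z := x + ε * Complex.I) (by simpa using hε)
  have := integral_im hi
  simp only [RCLike.im_eq_complex_im] at this
  rw [cauchyT, ← this, ← integral_neg]
  congr 1; ext t
  rw [Complex.div_im]
  simp [Complex.normSq_apply]
  ring_nf

lemma integrable_poisson {ε : ℝ} (hε : 0 < ε) : Integrable (fun s : ℝ => ε / (s ^ 2 + ε ^ 2)) := by
  have := (integrable_inv_one_add_sq.comp_div hε.ne').const_mul ε⁻¹
  refine this.congr (ae_of_all _ fun s => ?_)
  field_simp
  ring

lemma integral_poisson {ε : ℝ} (hε : 0 < ε) : ∫ s : ℝ, ε / (s ^ 2 + ε ^ 2) = Real.pi := by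
  have h := Measure.integral_comp_div (fun x : ℝ => (1 + x ^ 2)⁻¹) ε
  rw [integral_univ_inv_one_add_sq, abs_of_pos hε, smul_eq_mul] at h
  have h2 : ∫ s : ℝ, ε / (s ^ 2 + ε ^ 2) = ∫ s : ℝ, ε⁻¹ * (1 + (s / ε) ^ 2)⁻¹ := by
    congr 1; ext s; field_simp; ring
  rw [h2, integral_const_mul, h]; field_simp

/-- The imaginary part is minus `π` times the Poisson integral of `g`, hence bounded by `π`. -/
lemma abs_cauchyT_im_le {g : ℝ → ℝ} (hg : Measurable g) (hb : ∀ t, |g t| ≤ 1) {a : ℝ}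
    (hs : ∀ t, a < |t| → g t = 0) {x ε : ℝ} (hε : 0 < ε) :
    |(cauchyT g (x + ε * Complex.I)).im| ≤ Real.pi := by
  rw [cauchyT_im hg hb hs hε, abs_neg, ← Real.norm_eq_abs, ← integral_poisson hε,
    ← integral_sub_left_eq_self (fun s : ℝ => ε / (s ^ 2 + ε ^ 2)) volume x]
  refine norm_integral_le_of_norm_le ((integrable_poisson hε).comp_sub_left x) (ae_of_all _ ?_)
  intro t
  have h0 : 0 < ε / ((x - t) ^ 2 + ε ^ 2) := by positivity
  rw [norm_mul, Real.norm_eq_abs, Real.norm_eq_abs, abs_of_pos h0]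
  exact mul_le_of_le_one_left h0.le (hb t)

/-- Zygmund's exponential estimate: integrate the holomorphic function `exp (c F)` over the boundary
of a rectangle based at height `ε`. Since `|c Im F| ≤ π / 3`, the real part of `exp (c F)` is at
least `exp (c Re F) / 2`, while the other three sides stay at distance at least `a` from the
support of `g`. -/
lemma exp_cauchyT_le {g : ℝ → ℝ} (hg : Measurable g) (hb : ∀ t, |g t| ≤ 1) {a : ℝ} (ha : 0 < a)
    (hs : ∀ t, a < |t| → g t = 0) {ε : ℝ} (hε : 0 < ε) {c : ℝ} (hc : |c| = 1 / 3) :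
    IntervalIntegrable (fun x : ℝ => Real.exp (c * (cauchyT g (x + ε * Complex.I)).re)) volume
      (-(2 * a)) (2 * a) ∧
    ∫ x in (-(2 * a))..(2 * a), Real.exp (c * (cauchyT g (x + ε * Complex.I)).re)
      ≤ 16 * a * Real.exp 1 := by
  set F := cauchyT g with hF
  set G : ℂ → ℂ := fun z => Complex.exp (c * F z) with hG
  have hGd : ∀ z : ℂ, 0 < z.im → DifferentiableAt ℂ G z := fun z hz =>
    ((cauchyT_hasDerivAt hg hb hs hz).const_mul (c : ℂ)).cexp
  have hnG : ∀ z, ‖F z‖ ≤ 2 → ‖G z‖ ≤ Real.exp 1 := by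
    intro z hz
    rw [hG, Complex.norm_exp]
    apply Real.exp_le_exp.2
    have h1 : ‖(c : ℂ) * F z‖ ≤ 1 := by
      rw [norm_mul, Complex.norm_real, Real.norm_eq_abs, hc]; linarith
    exact (Complex.re_le_norm _).trans h1
  have hdist1 : ∀ (x y : ℝ), a ≤ y → ‖G (x + y * Complex.I)‖ ≤ Real.exp 1 := by
    intro x y hy
    refine hnG _ ((norm_cauchyT_le hb ha hs ha fun t _ => ?_).trans (by field_simp; rfl))
    have := im_le_norm_sub (z := x + y * Complex.I) t
    simp at this; linarith
  have hdist2 : ∀ (x y : ℝ), 2 * a ≤ |x| → ‖G (x + y * Complex.I)‖ ≤ Real.exp 1 := by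
    intro x y hx
    refine hnG _ ((norm_cauchyT_le hb ha hs ha fun t ht => ?_).trans (by field_simp; rfl))
    have := Complex.abs_re_le_norm ((x : ℂ) + y * Complex.I - t)
    simp at this
    have h3 := abs_sub_abs_le_abs_sub x t
    linarith
  -- Cauchy's theorem on the rectangle `[-2a, 2a] × [ε, ε + 2a]`.
  have hrect := Complex.integral_boundary_rect_eq_zero_of_differentiableOn G
    (⟨-(2 * a), ε⟩ : ℂ) ⟨2 * a, ε + 2 * a⟩ (by
      intro z hz
      refine (hGd z ?_).differentiableWithinAt
      have := hz.2
      simp only [mem_preimage, uIcc_of_le (show ε ≤ ε + 2 * a by linarith), mem_Icc] at this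
      linarith)
  simp only [] at hrect
  have hcont : Continuous (fun x : ℝ => G (x + ε * Complex.I)) := by
    rw [continuous_iff_continuousAt]
    intro x
    exact ContinuousAt.comp (f := fun x : ℝ => (x : ℂ) + ε * Complex.I) (g := G)
      (hGd _ (by simpa using hε)).continuousAt (by fun_prop)
  have hcontF : Continuous (fun x : ℝ => F (x + ε * Complex.I)) := by
    rw [continuous_iff_continuousAt]
    intro x
    exact ContinuousAt.comp (f := fun x : ℝ => (x : ℂ) + ε * Complex.I) (g := F)
      (cauchyT_hasDerivAt hg hb hs (by simpa using hε)).continuousAt (by fun_prop)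
  have hE : Continuous fun x : ℝ => Real.exp (c * (F (x + ε * Complex.I)).re) := by
    exact Real.continuous_exp.comp (continuous_const.mul (Complex.continuous_re.comp hcontF))
  refine ⟨hE.intervalIntegrable _ _, ?_⟩
  have b1 : ‖∫ x in (-(2 * a))..(2 * a), G (x + (↑(ε + 2 * a) : ℂ) * Complex.I)‖
      ≤ Real.exp 1 * |2 * a - -(2 * a)| :=
    intervalIntegral.norm_integral_le_of_norm_le_const fun x _ => hdist1 x _ (by linarith)
  have b2 : ‖∫ y in ε..(ε + 2 * a), G ((↑(2 * a) : ℂ) + y * Complex.I)‖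
      ≤ Real.exp 1 * |ε + 2 * a - ε| :=
    intervalIntegral.norm_integral_le_of_norm_le_const fun y _ => hdist2 _ y (le_abs_self _)
  have b3 : ‖∫ y in ε..(ε + 2 * a), G ((↑(-(2 * a)) : ℂ) + y * Complex.I)‖
      ≤ Real.exp 1 * |ε + 2 * a - ε| :=
    intervalIntegral.norm_integral_le_of_norm_le_const fun y _ => hdist2 _ y (by rw [abs_neg]; exact le_abs_self _)
  rw [show (2 * a - -(2 * a)) = 4 * a by ring, abs_of_pos (by linarith)] at b1
  rw [show (ε + 2 * a - ε) = 2 * a by ring, abs_of_pos (by linarith)] at b2 b3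
  set J := ∫ x in (-(2 * a))..(2 * a), G (x + (ε : ℂ) * Complex.I) with hJ
  have hJle : ‖J‖ ≤ 8 * a * Real.exp 1 := by
    set T := ∫ x in (-(2 * a))..(2 * a), G (x + (↑(ε + 2 * a) : ℂ) * Complex.I)
    set A := ∫ y in ε..(ε + 2 * a), G ((↑(2 * a) : ℂ) + y * Complex.I)
    set B := ∫ y in ε..(ε + 2 * a), G ((↑(-(2 * a)) : ℂ) + y * Complex.I)
    have : J = T - Complex.I • A + Complex.I • B := by
      linear_combination hrect
    rw [this]
    calc _ ≤ ‖T‖ + ‖Complex.I • A‖ + ‖Complex.I • B‖ :=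
          (norm_add_le _ _).trans (by gcongr; exact norm_sub_le _ _)
      _ = ‖T‖ + ‖A‖ + ‖B‖ := by simp
      _ ≤ _ := by linarith
  have hJre : J.re = ∫ x in (-(2 * a))..(2 * a), (G (x + (ε : ℂ) * Complex.I)).re := by
    have := (Complex.reCLM.intervalIntegral_comp_comm
      (hcont.intervalIntegrable (μ := volume) (-(2 * a)) (2 * a)))
    simpa using this.symm
  have hpt : ∀ x : ℝ, Real.exp (c * (F (x + ε * Complex.I)).re)
      ≤ 2 * (G (x + (ε : ℂ) * Complex.I)).re := by
    intro x
    have him : |c * (F (x + ε * Complex.I)).im| ≤ Real.pi / 3 := by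
      rw [abs_mul, hc]
      have := abs_cauchyT_im_le hg hb hs (x := x) hε
      linarith
    have hcos : (1 : ℝ) / 2 ≤ Real.cos (c * (F (x + ε * Complex.I)).im) := by
      rw [← Real.cos_abs, ← Real.cos_pi_div_three]
      exact Real.cos_le_cos_of_nonneg_of_le_pi (abs_nonneg _) (by linarith [Real.pi_pos]) him
    rw [hG]
    simp only [Complex.exp_re, Complex.re_ofReal_mul, Complex.im_ofReal_mul]
    have := Real.exp_pos (c * (F (x + ε * Complex.I)).re)
    nlinarith
  calc _ ≤ ∫ x in (-(2 * a))..(2 * a), 2 * (G (x + (ε : ℂ) * Complex.I)).re := by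
        apply intervalIntegral.integral_mono_on (by linarith) (hE.intervalIntegrable _ _)
        · exact ((Complex.continuous_re.comp hcont).const_mul 2).intervalIntegrable _ _
        · intro x _; exact hpt x
    _ = 2 * J.re := by rw [intervalIntegral.integral_const_mul, hJre]
    _ ≤ 2 * ‖J‖ := by gcongr; exact Complex.re_le_norm _
    _ ≤ _ := by linarith
end

/-! ### Truncated Hilbert transforms on lines -/

section
/-- The truncated Hilbert transform on the line (without the factor `1 / π`). -/
def hTr (ε : ℝ) (g : ℝ → ℝ) (t : ℝ) : ℝ := ∫ s, if ε < |s| then g (t - s) / s else 0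

lemma hTr_integrable {g : ℝ → ℝ} (hg : Measurable g) (hb : ∀ t, |g t| ≤ 1) {a : ℝ}
    (hs : ∀ t, a < |t| → g t = 0) {ε : ℝ} (hε : 0 < ε) (t : ℝ) :
    Integrable (fun s => if ε < |s| then g (t - s) / s else 0) := by
  refine integrable_of_bdd_supp (C := 1 / ε) (s := Icc (t - a) (t + a)) ?_ ?_ measurableSet_Icc
    (by simp) ?_
  · exact (Measurable.ite (measurableSet_lt measurable_const (by fun_prop))
      (by fun_prop) measurable_const).aestronglyMeasurable
  · intro s
    split_ifs with h
    · rw [norm_div, Real.norm_eq_abs, Real.norm_eq_abs]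
      exact div_le_div₀ zero_le_one (hb _) hε h.le
    · simp; positivity
  · intro s hs'
    have : g (t - s) = 0 := by
      apply hs
      by_contra h
      have := abs_le.1 (not_lt.1 h)
      exact hs' ⟨by linarith, by linarith⟩
    simp [this]

/-- The truncated kernel `1 / s` differs from the conjugate Poisson kernel by at most the
Poisson kernel. -/
lemma trunc_sub_conj_le {ε : ℝ} (hε : 0 < ε) (s : ℝ) :
    |(if ε < |s| then 1 / s else 0) - s / (s ^ 2 + ε ^ 2)| ≤ ε / (s ^ 2 + ε ^ 2) := by
  have hp : 0 < s ^ 2 + ε ^ 2 := by positivity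
  split_ifs with h
  · have hs : s ≠ 0 := by rintro rfl; simp at h; linarith
    have : 1 / s - s / (s ^ 2 + ε ^ 2) = ε * ε / (s * (s ^ 2 + ε ^ 2)) := by
      field_simp; ring
    rw [this, abs_div, abs_mul, abs_mul, abs_of_pos hε, abs_of_pos hp, ← div_div]
    gcongr
    rw [div_le_iff₀ (by positivity)]
    gcongr
  · rw [zero_sub, abs_neg, abs_div, abs_of_pos hp]
    gcongr
    linarith

/-- The truncated Hilbert transform differs by at most `π` from the real part of the Cauchy
transform at height `ε`. -/
lemma hTr_sub_re_le {g : ℝ → ℝ} (hg : Measurable g) (hb : ∀ t, |g t| ≤ 1) {a : ℝ}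
    (hs : ∀ t, a < |t| → g t = 0) {ε : ℝ} (hε : 0 < ε) (t : ℝ) :
    |hTr ε g t - (cauchyT g (t + ε * Complex.I)).re| ≤ Real.pi := by
  have hre : (cauchyT g (t + ε * Complex.I)).re = ∫ s, g (t - s) * (s / (s ^ 2 + ε ^ 2)) := by
    rw [cauchyT_re hg hb hs hε,
      ← integral_sub_left_eq_self (fun s => g (t - s) * (s / (s ^ 2 + ε ^ 2))) volume t]
    simp
  have hi2 : Integrable fun s => g (t - s) * (s / (s ^ 2 + ε ^ 2)) := by
    refine ((g_integrable hg hb hs).comp_sub_left t).mul_bdd (c := 1 / ε) ?_ (ae_of_all _ ?_)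
    · exact (Measurable.div measurable_id (by fun_prop)).aestronglyMeasurable
    · intro s
      rw [norm_div, Real.norm_eq_abs, Real.norm_eq_abs, abs_of_pos (by positivity : 0 < s ^ 2 + ε ^ 2),
        div_le_div_iff₀ (by positivity) hε]
      have := sq_nonneg (|s| - ε)
      rw [sub_sq, sq_abs] at this
      nlinarith [abs_nonneg s]
  rw [hre, hTr, ← integral_sub (hTr_integrable hg hb hs hε t) hi2, ← integral_poisson hε,
    ← Real.norm_eq_abs]
  refine norm_integral_le_of_norm_le (integrable_poisson hε) (ae_of_all _ fun s => ?_)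
  have : (if ε < |s| then g (t - s) / s else 0) - g (t - s) * (s / (s ^ 2 + ε ^ 2))
      = g (t - s) * ((if ε < |s| then 1 / s else 0) - s / (s ^ 2 + ε ^ 2)) := by
    split_ifs <;> ring
  rw [this, norm_mul, Real.norm_eq_abs, Real.norm_eq_abs]
  calc _ ≤ 1 * (ε / (s ^ 2 + ε ^ 2)) :=
        mul_le_mul (hb _) (trunc_sub_conj_le hε s) (abs_nonneg _) zero_le_one
    _ = _ := one_mul _

/-- The constant in the one-dimensional exponential estimate. -/
def expC (a : ℝ) : ℝ := Real.exp (Real.pi / 3) * (32 * a * Real.exp 1)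

/-- Exponential integrability of the truncated Hilbert transform of a function bounded by `1`,
uniformly in the truncation parameter. -/
lemma exp_hTr_le {g : ℝ → ℝ} (hg : Measurable g) (hb : ∀ t, |g t| ≤ 1) {a : ℝ} (ha : 0 < a)
    (hs : ∀ t, a < |t| → g t = 0) {ε : ℝ} (hε : 0 < ε) :
    ∫⁻ t in Icc (-(2 * a)) (2 * a), ENNReal.ofReal (Real.exp (|hTr ε g t| / 3))
      ≤ ENNReal.ofReal (expC a) := by
  obtain ⟨i1, h1⟩ := exp_cauchyT_le hg hb ha hs hε (c := 1 / 3) (by norm_num)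
  obtain ⟨i2, h2⟩ := exp_cauchyT_le hg hb ha hs hε (c := -(1 / 3)) (by rw [abs_neg]; norm_num)
  rw [intervalIntegrable_iff_integrableOn_Icc_of_le (by linarith)] at i1 i2
  rw [intervalIntegral.integral_of_le (by linarith), ← integral_Icc_eq_integral_Ioc] at h1 h2
  set u := fun t : ℝ => (cauchyT g (t + ε * Complex.I)).re with hu
  have hpt : ∀ t, Real.exp (|hTr ε g t| / 3) ≤ Real.exp (Real.pi / 3) *
      (Real.exp (1 / 3 * u t) + Real.exp (-(1 / 3) * u t)) := by
    intro t
    have h := hTr_sub_re_le hg hb hs hε t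
    have h3 : |hTr ε g t| ≤ Real.pi + |u t| := by
      have := abs_sub_abs_le_abs_sub (hTr ε g t) (u t)
      linarith
    have h4 : Real.exp (|u t| / 3) ≤ Real.exp (1 / 3 * u t) + Real.exp (-(1 / 3) * u t) := by
      rcases abs_cases (u t) with ⟨h, _⟩ | ⟨h, _⟩ <;> rw [h]
      · rw [show u t / 3 = 1 / 3 * u t by ring]
        linarith [Real.exp_pos (-(1 / 3) * u t)]
      · rw [show -u t / 3 = -(1 / 3) * u t by ring]
        linarith [Real.exp_pos (1 / 3 * u t)]
    calc _ ≤ Real.exp (Real.pi / 3 + |u t| / 3) := Real.exp_le_exp.2 (by linarith)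
      _ = Real.exp (Real.pi / 3) * Real.exp (|u t| / 3) := Real.exp_add _ _
      _ ≤ _ := by gcongr
  calc _ ≤ ∫⁻ t in Icc (-(2 * a)) (2 * a), ENNReal.ofReal (Real.exp (Real.pi / 3) *
      (Real.exp (1 / 3 * u t) + Real.exp (-(1 / 3) * u t))) :=
        lintegral_mono fun t => ENNReal.ofReal_le_ofReal (hpt t)
    _ = ENNReal.ofReal (∫ t in Icc (-(2 * a)) (2 * a), Real.exp (Real.pi / 3) *
      (Real.exp (1 / 3 * u t) + Real.exp (-(1 / 3) * u t))) := by
        refine (ofReal_integral_eq_lintegral_ofReal ?_ (ae_of_all _ fun t => by positivity)).symm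
        exact (i1.add i2).const_mul _
    _ ≤ _ := by
        apply ENNReal.ofReal_le_ofReal
        rw [integral_const_mul, integral_add i1 i2, expC]
        gcongr
        linarith

variable {n : ℕ}

/-- The truncated Hilbert transform of `φ` along the direction `y`, at the point `x`. -/
def hDir (ε : ℝ) (φ : E n → ℝ) (y x : E n) : ℝ :=
  ∫ s : ℝ, if ε < |s| * ‖y‖ then φ (x - s • y) / s else 0

lemma hDir_measurable (ε : ℝ) {φ : E n → ℝ} (hφ : Measurable φ) :
    Measurable (fun p : E n × E n => hDir ε φ p.1 p.2) := by
  have : Measurable (fun q : (E n × E n) × ℝ =>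
      if ε < |q.2| * ‖q.1.1‖ then φ (q.1.2 - q.2 • q.1.1) / q.2 else 0) :=
    Measurable.ite (measurableSet_lt measurable_const (by fun_prop)) (by fun_prop) measurable_const
  exact this.stronglyMeasurable.integral_prod_right.measurable

/-- On each line in the direction `y`, the directional transform is a one-dimensional truncated
Hilbert transform. -/
lemma hDir_line {ε : ℝ} {φ : E n → ℝ} {x y : E n} (hy : 1 ≤ ‖y‖) (t : ℝ) :
    hDir ε φ y (x + t • y) = hTr (ε / ‖y‖) (fun τ => φ (x + τ • y)) t := by
  unfold hDir hTr
  congr 1; ext s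
  simp only [div_lt_iff₀ (show 0 < ‖y‖ by linarith),
    show x + t • y - s • y = x + (t - s) • y by module]

lemma hDir_measurable_right (ε : ℝ) {φ : E n → ℝ} (hφ : Measurable φ) (y : E n) :
    Measurable (fun x => hDir ε φ y x) := by
  have h1 : Measurable (fun x : E n => ((y, x) : E n × E n)) := by fun_prop
  have h2 := hDir_measurable ε hφ
  have := Measurable.comp (g := fun p : E n × E n => hDir ε φ p.1 p.2) h2 h1
  exact this

/-- The constant in the directional exponential estimate. -/
def slC (n : ℕ) (R : ℝ) : ℝ≥0∞ :=
  volume (Metric.closedBall (0 : E n) (3 * R)) * ENNReal.ofReal (expC (4 * R)) /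
    ENNReal.ofReal (2 * R)

lemma slC_lt_top (n : ℕ) {R : ℝ} (hR : 0 < R) : slC n R < ⊤ := by
  have h1 : volume (Metric.closedBall (0 : E n) (3 * R)) ≠ ⊤ := measure_closedBall_lt_top.ne
  have h2 : ENNReal.ofReal (2 * R) ≠ 0 := by simpa using hR
  exact ENNReal.div_lt_top (ENNReal.mul_ne_top h1 ENNReal.ofReal_ne_top) h2

/-- Exponential integrability of the directional transforms, by averaging over translations along
the direction and applying the one-dimensional estimate on each line. -/
lemma exp_hDir_le {φ : E n → ℝ} (hφ : Measurable φ) (hb : ∀ x, |φ x| ≤ 1) {R : ℝ} (hR : 0 < R)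
    (hs : ∀ x, R ≤ ‖x‖ → φ x = 0) {ε : ℝ} (hε : 0 < ε) {y : E n} (hy1 : 1 ≤ ‖y‖) (hy2 : ‖y‖ ≤ 2) :
    ∫⁻ x in Metric.ball 0 R, ENNReal.ofReal (Real.exp (|hDir ε φ y x| / 3)) ≤ slC n R := by
  have hmh := hDir_measurable_right ε hφ y
  set G : E n → ℝ≥0∞ := (Metric.ball 0 R).indicator
    (fun x => ENNReal.ofReal (Real.exp (|hDir ε φ y x| / 3))) with hG
  have hGm : Measurable G :=
    Measurable.indicator (by fun_prop) measurableSet_ball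
  rw [← lintegral_indicator measurableSet_ball]
  change ∫⁻ x, G x ≤ _
  rw [slC, ENNReal.le_div_iff_mul_le (by simp [hR]) (Or.inl ENNReal.ofReal_ne_top)]
  -- Translation invariance: average over the translates of `G` by `t • y`, `|t| ≤ R`.
  have e1 : (∫⁻ x, G x) * ENNReal.ofReal (2 * R)
      = ∫⁻ t in Icc (-R) R, ∫⁻ x, G (x + t • y) := by
    have : ∀ t : ℝ, ∫⁻ x, G (x + t • y) = ∫⁻ x, G x := fun t =>
      lintegral_add_right_eq_self G (t • y)
    simp_rw [this]
    rw [setLIntegral_const, Real.volume_Icc]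
    congr 2; ring
  rw [e1, lintegral_lintegral_swap (by fun_prop)]
  have e2 : ∀ x : E n, ∫⁻ t in Icc (-R) R, G (x + t • y)
      ≤ (Metric.closedBall (0 : E n) (3 * R)).indicator (fun _ => ENNReal.ofReal (expC (4 * R))) x := by
    intro x
    by_cases hx : x ∈ Metric.closedBall (0 : E n) (3 * R)
    · rw [indicator_of_mem hx]
      rw [mem_closedBall_zero_iff] at hx
      have h1 := exp_hTr_le (g := fun τ => φ (x + τ • y)) (by fun_prop) (fun t => hb _)
        (a := 4 * R) (by positivity) (fun t ht => by
          apply hs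
          have h3 : ‖t • y‖ ≤ ‖x + t • y‖ + ‖x‖ := by
            simpa using norm_sub_le (x + t • y) x
          rw [norm_smul, Real.norm_eq_abs] at h3
          nlinarith [abs_nonneg t]) (ε := ε / ‖y‖) (by positivity)
      refine le_trans ?_ h1
      refine le_trans (lintegral_mono fun t => ?_) (lintegral_mono_set
        (Icc_subset_Icc (by linarith) (by linarith)))
      rw [← hDir_line hy1, hG]
      exact indicator_le_self _ _ _
    · rw [indicator_of_notMem hx]
      rw [mem_closedBall_zero_iff, not_le] at hx
      apply le_of_eq
      rw [setLIntegral_eq_zero measurableSet_Icc]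
      intro t ht
      rw [hG]
      apply indicator_of_notMem
      rw [mem_ball_zero_iff, not_lt]
      have h3 : ‖x‖ ≤ ‖x + t • y‖ + ‖t • y‖ := by
        simpa using norm_sub_le (x + t • y) (t • y)
      rw [norm_smul, Real.norm_eq_abs] at h3
      have := abs_le.2 ht
      nlinarith [abs_nonneg t]
  refine (lintegral_mono e2).trans ?_
  rw [lintegral_indicator measurableSet_closedBall, setLIntegral_const, mul_comm]
end

/-! ### Truncated singular integrals and the method of rotations -/

section
variable {n : ℕ}

/-- The properties of an odd Calderón–Zygmund kernel used below: the size bound, homogeneity of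
degree `-n` extended to all nonzero real dilations through oddness, and the Lipschitz regularity
bound, all with one constant `C`. Divisions are cleared from the inequalities. -/
structure GoodK (K : E n → ℝ) (C : ℝ) : Prop where
  dim : 0 < n
  pos : 0 < C
  meas : Measurable K
  bd : ∀ y, |K y| * ‖y‖ ^ n ≤ C
  hom : ∀ (s : ℝ) (y : E n), s ≠ 0 → |s| ^ n * (s * K (s • y)) = |s| * K y
  odd : ∀ y, K (-y) = -K y
  smooth : ∀ y v : E n, y ≠ 0 → ‖v‖ ≤ ‖y‖ / 2 → |K (y - v) - K y| * ‖y‖ ^ (n + 1) ≤ C * ‖v‖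

/-- The truncated kernel. -/
def Ke (K : E n → ℝ) (ε : ℝ) (y : E n) : ℝ := if ε < ‖y‖ then K y else 0

/-- The truncated singular integral of a kernel `K`. -/
def Tk (K : E n → ℝ) (ε : ℝ) (f : E n → ℝ) (x : E n) : ℝ := ∫ y, Ke K ε y * f (x - y)

lemma Teps_eq_Tk (Ω : E n → ℝ) (ε : ℝ) (f : E n → ℝ) (x : E n) :
    Teps Ω ε f x = Tk (kernelFn Ω) ε f x := by
  unfold Teps Tk
  rw [← integral_indicator (measurableSet_lt measurable_const (by fun_prop))]
  congr 1; ext y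
  simp only [indicator, mem_ofPred_eq, Ke]
  split_ifs <;> simp

lemma Tk_eq_conv (K : E n → ℝ) (ε : ℝ) (f : E n → ℝ) (x : E n) :
    Tk K ε f x = ∫ z, Ke K ε (x - z) * f z := by
  unfold Tk
  rw [← integral_sub_left_eq_self (fun z => Ke K ε (x - z) * f z) volume x]
  simp

lemma Tk_const_mul (K : E n → ℝ) (ε : ℝ) (c : ℝ) (f : E n → ℝ) (x : E n) :
    Tk K ε (fun z => c * f z) x = c * Tk K ε f x := by
  unfold Tk
  rw [← integral_const_mul]
  congr 1; ext; ring

section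
variable {K : E n → ℝ} {C : ℝ} (hK : GoodK K C)
include hK

lemma Ke_meas (ε : ℝ) : Measurable (Ke K ε) :=
  Measurable.ite (measurableSet_lt measurable_const (by fun_prop)) hK.meas measurable_const

lemma Ke_odd (ε : ℝ) (y : E n) : Ke K ε (-y) = -Ke K ε y := by
  unfold Ke; rw [norm_neg, hK.odd]; split_ifs <;> simp

lemma Ke_bd {ε : ℝ} (hε : 0 < ε) (y : E n) : |Ke K ε y| ≤ C / ε ^ n := by
  unfold Ke
  have := hK.pos
  split_ifs with h
  · rw [le_div_iff₀ (by positivity)]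
    refine le_trans ?_ (hK.bd y)
    gcongr
  · simp; positivity

lemma Tk_integrable {ε : ℝ} (hε : 0 < ε) {f : E n → ℝ} (hf : Integrable f) (x : E n) :
    Integrable (fun z => Ke K ε (x - z) * f z) := by
  refine hf.bdd_mul (c := C / ε ^ n) ?_ (ae_of_all _ fun z => Ke_bd hK hε _)
  exact ((Ke_meas hK ε).comp (measurable_const.sub measurable_id)).aestronglyMeasurable

lemma Tk_integrable' {ε : ℝ} (hε : 0 < ε) {f : E n → ℝ} (hf : Integrable f) (x : E n) :
    Integrable (fun y => Ke K ε y * f (x - y)) := by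
  have := (Tk_integrable hK hε hf x).comp_sub_left x
  simpa using this

lemma Tk_measurable (ε : ℝ) {f : E n → ℝ} (hf : Measurable f) : Measurable (Tk K ε f) := by
  have : Measurable (fun q : E n × E n => Ke K ε q.2 * f (q.1 - q.2)) := by
    have := Ke_meas hK ε
    fun_prop
  exact this.stronglyMeasurable.integral_prod_right.measurable

lemma Tk_bd {ε : ℝ} (hε : 0 < ε) {f : E n → ℝ} (hf : Integrable f) (x : E n) :
    |Tk K ε f x| ≤ C / ε ^ n * ∫ z, |f z| := by
  rw [Tk_eq_conv, ← integral_const_mul, ← Real.norm_eq_abs]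
  refine norm_integral_le_of_norm_le (hf.abs.const_mul _) (ae_of_all _ fun z => ?_)
  rw [norm_mul, Real.norm_eq_abs, Real.norm_eq_abs]
  exact mul_le_mul_of_nonneg_right (Ke_bd hK hε _) (abs_nonneg _)

lemma Tk_sub {ε : ℝ} (hε : 0 < ε) {f g : E n → ℝ} (hf : Integrable f) (hg : Integrable g)
    (x : E n) : Tk K ε (fun z => f z - g z) x = Tk K ε f x - Tk K ε g x := by
  rw [Tk_eq_conv, Tk_eq_conv, Tk_eq_conv,
    ← integral_sub (Tk_integrable hK hε hf x) (Tk_integrable hK hε hg x)]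
  congr 1; ext; ring

/-- The truncated operators are antisymmetric, because the truncated kernels are odd. -/
lemma Tk_antisymm {ε : ℝ} (hε : 0 < ε) {f φ : E n → ℝ} (hf : Integrable f) (hφ : Integrable φ) :
    ∫ x, Tk K ε f x * φ x = - ∫ x, f x * Tk K ε φ x := by
  have hi : Integrable (Function.uncurry fun x z : E n => Ke K ε (x - z) * f z * φ x)
      (volume.prod volume) := by
    have h1 : Integrable (fun p : E n × E n => φ p.1 * f p.2) (volume.prod volume) := hφ.mul_prod hf
    have h2 := h1.bdd_mul (f := fun p : E n × E n => Ke K ε (p.1 - p.2)) (c := C / ε ^ n) ?_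
      (ae_of_all _ fun z => Ke_bd hK hε _)
    · refine h2.congr (ae_of_all _ fun p => ?_)
      simp only [Function.uncurry]; ring
    · exact ((Ke_meas hK ε).comp (measurable_fst.sub measurable_snd)).aestronglyMeasurable
  calc ∫ x, Tk K ε f x * φ x = ∫ x, ∫ z, Ke K ε (x - z) * f z * φ x := by
        congr 1; ext x
        rw [Tk_eq_conv, integral_mul_const]
    _ = ∫ z, ∫ x, Ke K ε (x - z) * f z * φ x := integral_integral_swap hi
    _ = ∫ z, -(f z * Tk K ε φ z) := by
        congr 1; ext z
        rw [Tk_eq_conv, ← integral_const_mul, ← integral_neg]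
        congr 1; ext x
        rw [← neg_sub z x, Ke_odd hK]; ring
    _ = _ := integral_neg _
end

/-- The `ds / |s|` measure of the dilations `s` that carry the annulus `1 ≤ ‖y‖ ≤ 2` onto one
containing the radius `r` does not depend on `r`. -/
lemma integral_dyadic {r : ℝ} (hr : 0 < r) :
    ∫ s : ℝ, (if |s| ≤ r ∧ r ≤ 2 * |s| then |s|⁻¹ else 0) = 2 * Real.log 2 := by
  rw [integral_comp_abs (f := fun s : ℝ => if s ≤ r ∧ r ≤ 2 * s then s⁻¹ else 0)]
  congr 1
  have h1 : ∀ s : ℝ, (if s ≤ r ∧ r ≤ 2 * s then s⁻¹ else 0)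
      = (Icc (r / 2) r).indicator (fun s => s⁻¹) s := by
    intro s
    simp only [indicator, mem_Icc]
    congr 1
    apply propext
    constructor <;> rintro ⟨h, h'⟩ <;> constructor <;> linarith
  simp_rw [h1]
  rw [setIntegral_indicator measurableSet_Icc,
    show Ioi (0 : ℝ) ∩ Icc (r / 2) r = Icc (r / 2) r from inter_eq_right.2
      (fun s hs => lt_of_lt_of_le (by positivity : 0 < r / 2) hs.1),
    integral_Icc_eq_integral_Ioc, ← intervalIntegral.integral_of_le (by linarith),
    integral_inv_of_pos (by positivity) hr]
  congr 1; field_simp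

/-- The annulus `1 ≤ ‖y‖ ≤ 2`, which plays the role of the unit sphere. -/
def Ann (n : ℕ) : Set (E n) := {y | 1 ≤ ‖y‖ ∧ ‖y‖ ≤ 2}

lemma Ann_meas : MeasurableSet (Ann n) :=
  (measurableSet_le measurable_const measurable_norm).inter
    (measurableSet_le measurable_norm measurable_const)

lemma Ann_subset : Ann n ⊆ Metric.closedBall 0 2 := fun y hy => by simpa using hy.2

lemma Ann_vol : volume (Ann n) < ⊤ := (measure_mono Ann_subset).trans_lt measure_closedBall_lt_top

/-- The method of rotations: an odd singular integral is an average of directional Hilbert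
transforms. The average is over the annulus instead of the sphere, which avoids polar
coordinates: one averages over all (positive and negative) dilations of the annulus. -/
lemma rotations {K : E n → ℝ} {C : ℝ} (hK : GoodK K C) {φ : E n → ℝ} (hφ : Measurable φ)
    (hb : ∀ x, |φ x| ≤ 1) {R : ℝ}
    (hs : ∀ x, R ≤ ‖x‖ → φ x = 0) {ε : ℝ} (hε : 0 < ε) (x : E n) :
    2 * Real.log 2 * Tk K ε φ x = ∫ y in Ann n, K y * hDir ε φ y x := by
  have hC := hK.pos
  have hKm := hK.meas
  have hKem := Ke_meas hK ε
  -- Integrating `W` first in `s` gives `T_ε φ`; integrating it first in `y`, after the substitution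
  -- `y ↦ s • y`, gives the directional transforms, with integrand `V`.
  set W : ℝ → E n → ℝ := fun s y =>
    (if |s| ≤ ‖y‖ ∧ ‖y‖ ≤ 2 * |s| then |s|⁻¹ else 0) * (Ke K ε y * φ (x - y)) with hW
  set V : ℝ → E n → ℝ := fun s y =>
    (Ann n).indicator K y * (if ε < |s| * ‖y‖ then φ (x - s • y) / s else 0) with hV
  have hnorm : ∀ y : E n, ‖x‖ + R < ‖y‖ → φ (x - y) = 0 := by
    intro y hy
    apply hs
    have : ‖y‖ ≤ ‖x - y‖ + ‖x‖ := by
      have := norm_sub_le (x - y) x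
      simpa using this
    linarith
  have hset : MeasurableSet (Icc (-(‖x‖ + R)) (‖x‖ + R) ×ˢ Metric.closedBall (0 : E n) (‖x‖ + R + 2)) :=
    measurableSet_Icc.prod measurableSet_closedBall
  have hfin : ((volume : Measure ℝ).prod (volume : Measure (E n)))
      (Icc (-(‖x‖ + R)) (‖x‖ + R) ×ˢ Metric.closedBall (0 : E n) (‖x‖ + R + 2)) < ⊤ := by
    rw [Measure.prod_prod]
    exact ENNReal.mul_lt_top (by simp) measure_closedBall_lt_top
  have hWi : Integrable (Function.uncurry W) ((volume : Measure ℝ).prod volume) := by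
    refine integrable_of_bdd_supp (C := 2 / ε * (C / ε ^ n)) ?_ ?_ hset hfin ?_
    · refine Measurable.aestronglyMeasurable (Measurable.mul (Measurable.ite ?_ (by fun_prop)
        measurable_const) (by fun_prop))
      exact (measurableSet_le (f := fun a : ℝ × E n => |a.1|) (g := fun a => ‖a.2‖)
        (by fun_prop) (by fun_prop)).inter (measurableSet_le (f := fun a : ℝ × E n => ‖a.2‖)
        (g := fun a => 2 * |a.1|) (by fun_prop) (by fun_prop))
    · rintro ⟨s, y⟩
      simp only [Function.uncurry, hW, norm_mul, Real.norm_eq_abs]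
      by_cases hy : ε < ‖y‖
      · have h1 : |Ke K ε y| * |φ (x - y)| ≤ C / ε ^ n := by
          simpa using mul_le_mul (Ke_bd hK hε y) (hb (x - y)) (abs_nonneg _) (by positivity)
        refine mul_le_mul ?_ h1 (by positivity) (by positivity)
        split_ifs with h
        · rw [abs_inv, abs_abs, inv_le_comm₀ (by linarith) (by positivity), inv_div]
          linarith
        · simp; positivity
      · simp [Ke, hy]; positivity
    · rintro ⟨s, y⟩ h
      simp only [Function.uncurry, hW]
      by_cases h1 : ‖x‖ + R < ‖y‖
      · simp [hnorm y h1]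
      · rw [if_neg, zero_mul]
        rintro ⟨h2, h3⟩
        refine h ⟨abs_le.1 (by linarith), ?_⟩
        rw [mem_closedBall_zero_iff]; linarith
  have hVi : Integrable (Function.uncurry V) ((volume : Measure ℝ).prod volume) := by
    have hAb : ∀ y, |(Ann n).indicator K y| ≤ C := by
      intro y
      by_cases hy : y ∈ Ann n
      · rw [indicator_of_mem hy]
        refine le_trans ?_ (hK.bd y)
        exact le_mul_of_one_le_right (abs_nonneg _) (one_le_pow₀ hy.1)
      · simp [hy, hC.le]
    refine integrable_of_bdd_supp (C := C * (2 / ε)) ?_ ?_ hset hfin ?_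
    · have := hKm.indicator (Ann_meas (n := n))
      refine Measurable.aestronglyMeasurable (Measurable.mul (by fun_prop)
        (Measurable.ite ?_ (by fun_prop) measurable_const))
      exact measurableSet_lt measurable_const (by fun_prop)
    · rintro ⟨s, y⟩
      simp only [Function.uncurry, hV, norm_mul, Real.norm_eq_abs]
      by_cases hy : y ∈ Ann n
      · refine mul_le_mul (hAb y) ?_ (abs_nonneg _) hC.le
        split_ifs with h
        · rw [abs_div]
          have h2 : ε / 2 < |s| := by have := hy.2; nlinarith [abs_nonneg s]
          calc _ ≤ 1 / (ε / 2) := div_le_div₀ zero_le_one (hb _) (by positivity) h2.le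
            _ = _ := by field_simp
        · simp; positivity
      · simp [hy]; positivity
    · rintro ⟨s, y⟩ h
      simp only [Function.uncurry, hV]
      by_cases hy : y ∈ Ann n
      · by_cases h1 : ‖x‖ + R < ‖s • y‖
        · simp [hnorm _ h1]
        · exfalso
          rw [norm_smul, Real.norm_eq_abs, not_lt] at h1
          have h3 : |s| ≤ ‖x‖ + R := by have := hy.1; nlinarith [abs_nonneg s]
          refine h ⟨abs_le.1 h3, ?_⟩
          rw [mem_closedBall_zero_iff]
          have := hy.2; have := abs_nonneg s
          linarith
      · simp [hy]
  have e1 : ∫ y, ∫ s, W s y = 2 * Real.log 2 * Tk K ε φ x := by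
    rw [Tk, ← integral_const_mul]
    congr 1; ext y
    rw [hW]; simp only []
    rw [integral_mul_const]
    by_cases hy : ε < ‖y‖
    · rw [integral_dyadic (hε.trans hy)]
    · simp [Ke, hy]
  have e2 : ∀ s : ℝ, s ≠ 0 → ∫ y, W s y = ∫ y, V s y := by
    intro s hs0
    have hsp : 0 < |s| := abs_pos.2 hs0
    have h := Measure.integral_comp_smul (volume : Measure (E n)) (fun y => W s y) s
    rw [finrank_euclideanSpace, Fintype.card_fin, abs_inv, abs_pow, smul_eq_mul,
      eq_comm, inv_mul_eq_iff_eq_mul₀ (by positivity)] at h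
    rw [h, ← integral_const_mul]
    congr 1; ext y
    have hcond : (|s| ≤ ‖s • y‖ ∧ ‖s • y‖ ≤ 2 * |s|) ↔ y ∈ Ann n := by
      rw [norm_smul, Real.norm_eq_abs, mul_comm 2, mul_le_mul_iff_right₀ hsp,
        le_mul_iff_one_le_right hsp]
      rfl
    by_cases hy : y ∈ Ann n
    · have hw : W s (s • y) = |s|⁻¹ * (Ke K ε (s • y) * φ (x - s • y)) := by
        simp only [hW]; rw [if_pos (hcond.2 hy)]
      rw [hw]
      simp only [hV, Ke, norm_smul, Real.norm_eq_abs, indicator_of_mem hy]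
      by_cases h3 : ε < |s| * ‖y‖
      · simp only [h3, if_true]
        have := hK.hom s y hs0
        field_simp
        linear_combination (φ (x - s • y)) * this
      · simp [h3]
    · have hw : W s (s • y) = 0 := by
        simp only [hW]; rw [if_neg (mt hcond.1 hy), zero_mul]
      rw [hw]
      simp [hV, hy]
  have e3 : ∫ s, ∫ y, W s y = ∫ s, ∫ y, V s y := by
    apply integral_congr_ae
    filter_upwards [compl_mem_ae_iff.2 (show (volume : Measure ℝ) {0} = 0 by simp)] with s hs0
    exact e2 s hs0
  rw [← e1, ← integral_integral_swap hWi, e3, integral_integral_swap hVi,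
    ← integral_indicator Ann_meas]
  congr 1; ext y
  simp only [hV, integral_const_mul, indicator, hDir]
  split_ifs <;> simp
end

/-! ### Uniform `L log L` estimates -/

section
variable {n : ℕ}

/-- Young's inequality for the pair `a log⁺ a` and `exp b`. -/
lemma young_exp {a b : ℝ} (ha : 0 ≤ a) (hb : 0 ≤ b) :
    a * b ≤ a * Real.log (max a 1) + Real.exp b := by
  rcases le_or_gt a 1 with h | h
  · rw [max_eq_right h, Real.log_one, mul_zero, zero_add]
    have := Real.add_one_le_exp b
    nlinarith
  · rw [max_eq_left h.le]
    have h0 : 0 < a := by linarith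
    have h1 := Real.add_one_le_exp (b - Real.log a)
    have h2 : Real.exp b = a * Real.exp (b - Real.log a) := by
      rw [Real.exp_sub, Real.exp_log h0]; field_simp
    rw [h2]
    nlinarith

/-- The operator constant of the `L log L` estimates. -/
def keA (n : ℕ) (C : ℝ) : ℝ≥0∞ := ENNReal.ofReal (3 * C / (2 * Real.log 2)) * volume (Ann n)

lemma keA_lt_top (n : ℕ) (C : ℝ) : keA n C < ⊤ := ENNReal.mul_lt_top ofReal_lt_top Ann_vol

/-- The modular `∫_B |u| log⁺(|u|/δ) + c δ` which controls `∫_B |T_ε u|`. -/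
def keL (R δ : ℝ) (u : E n → ℝ) : ℝ≥0∞ :=
  (∫⁻ x in Metric.ball 0 R, ENNReal.ofReal (|u x| * Real.log (max (|u x| / δ) 1)))
    + ENNReal.ofReal δ * slC n R

section
variable {K : E n → ℝ} {C : ℝ} (hK : GoodK K C)
include hK

/-- Pointwise domination of `T_ε φ` by an average of directional transforms; a consequence of
`rotations`, since `|K| ≤ C` on the annulus. -/
lemma ofReal_abs_Tk_le {φ : E n → ℝ} (hφ : Measurable φ)
    (hb : ∀ x, |φ x| ≤ 1) {R : ℝ} (hs : ∀ x, R ≤ ‖x‖ → φ x = 0) {ε : ℝ} (hε : 0 < ε) (x : E n) :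
    ENNReal.ofReal |Tk K ε φ x| ≤ ENNReal.ofReal (C / (2 * Real.log 2)) *
      ∫⁻ y in Ann n, ENNReal.ofReal |hDir ε φ y x| := by
  have hl : 0 < 2 * Real.log 2 := by positivity
  have hC := hK.pos
  have h := rotations hK hφ hb hs hε x
  have h1 : Tk K ε φ x = (2 * Real.log 2)⁻¹ * ∫ y in Ann n, K y * hDir ε φ y x := by
    rw [← h]; field_simp
  rw [h1, abs_mul, ENNReal.ofReal_mul (abs_nonneg _), abs_of_pos (inv_pos.2 hl), div_eq_inv_mul,
    ENNReal.ofReal_mul (inv_pos.2 hl).le, mul_assoc]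
  gcongr
  rw [← Real.norm_eq_abs, ofReal_norm]
  refine (enorm_integral_le_lintegral_enorm _).trans ?_
  rw [← lintegral_const_mul' _ _ ofReal_ne_top]
  refine setLIntegral_mono' Ann_meas fun y hy => ?_
  rw [← ofReal_norm, norm_mul, Real.norm_eq_abs, Real.norm_eq_abs, ← ENNReal.ofReal_mul hC.le]
  gcongr
  refine le_trans ?_ (hK.bd y)
  exact le_mul_of_one_le_right (abs_nonneg _) (one_le_pow₀ hy.1)

/-- The basic `L log L` estimate: `|u| |T_ε φ|` is integrable with a bound uniform in `ε` and in
`|φ| ≤ 1`. -/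
lemma ke_pairing {φ : E n → ℝ} (hφ : Measurable φ)
    (hb : ∀ x, |φ x| ≤ 1) {R : ℝ} (hR : 0 < R) (hs : ∀ x, R ≤ ‖x‖ → φ x = 0) {ε : ℝ} (hε : 0 < ε)
    {u : E n → ℝ} (hu : Measurable u) {δ : ℝ} (hδ : 0 < δ) :
    ∫⁻ x in Metric.ball 0 R, ENNReal.ofReal (|u x| * |Tk K ε φ x|) ≤ keA n C * keL R δ u := by
  have hl : 0 < 2 * Real.log 2 := by positivity
  have hC := hK.pos
  have hm := hDir_measurable ε hφ
  have hm2 : Measurable (fun p : E n × E n =>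
      ENNReal.ofReal |u p.2| * ENNReal.ofReal |hDir ε φ p.1 p.2|) := by
    have h1 : Measurable (fun p : E n × E n => ENNReal.ofReal |hDir ε φ p.1 p.2|) :=
      ENNReal.measurable_ofReal.comp (measurable_abs.comp hm)
    have h2 : Measurable (fun p : E n × E n => ENNReal.ofReal |u p.2|) :=
      ENNReal.measurable_ofReal.comp (measurable_abs.comp (hu.comp measurable_snd))
    exact h2.mul h1
  -- For each direction, Young's inequality with `a = |u| / δ` and `b = |hDir ε φ y| / 3`.
  have key : ∀ y ∈ Ann n, ∫⁻ x in Metric.ball 0 R,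
      ENNReal.ofReal |u x| * ENNReal.ofReal |hDir ε φ y x| ≤ ENNReal.ofReal 3 * keL R δ u := by
    intro y hy
    have h1 := exp_hDir_le hφ hb hR hs hε hy.1 hy.2
    have h2 : ∀ x, ENNReal.ofReal |u x| * ENNReal.ofReal |hDir ε φ y x| ≤
        ENNReal.ofReal 3 * (ENNReal.ofReal (|u x| * Real.log (max (|u x| / δ) 1)) +
          ENNReal.ofReal δ * ENNReal.ofReal (Real.exp (|hDir ε φ y x| / 3))) := by
      intro x
      have hlog : 0 ≤ Real.log (max (|u x| / δ) 1) := Real.log_nonneg (le_max_right _ _)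
      rw [← ENNReal.ofReal_mul (abs_nonneg _), ← ENNReal.ofReal_mul hδ.le,
        ← ENNReal.ofReal_add (by positivity) (by positivity), ← ENNReal.ofReal_mul (by norm_num)]
      apply ENNReal.ofReal_le_ofReal
      have h3 := young_exp (a := |u x| / δ) (b := |hDir ε φ y x| / 3) (by positivity)
        (by positivity)
      have h4 := mul_le_mul_of_nonneg_left h3 (show 0 ≤ 3 * δ by positivity)
      have e1 : 3 * δ * (|u x| / δ * (|hDir ε φ y x| / 3)) = |u x| * |hDir ε φ y x| := by
        field_simp
      have e2 : 3 * δ * (|u x| / δ * Real.log (max (|u x| / δ) 1) +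
          Real.exp (|hDir ε φ y x| / 3)) = 3 * (|u x| * Real.log (max (|u x| / δ) 1) + δ *
          Real.exp (|hDir ε φ y x| / 3)) := by
        field_simp
      rw [e1, e2] at h4
      exact h4
    calc _ ≤ _ := lintegral_mono h2
      _ ≤ _ := by
        rw [lintegral_const_mul' _ _ ofReal_ne_top, lintegral_add_left (by fun_prop),
          lintegral_const_mul' _ _ ofReal_ne_top]
        unfold keL
        gcongr
  calc ∫⁻ x in Metric.ball 0 R, ENNReal.ofReal (|u x| * |Tk K ε φ x|)
      ≤ ∫⁻ x in Metric.ball 0 R, ENNReal.ofReal (C / (2 * Real.log 2)) *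
        ∫⁻ y in Ann n, ENNReal.ofReal |u x| * ENNReal.ofReal |hDir ε φ y x| := by
        refine lintegral_mono fun x => ?_
        simp only []
        rw [lintegral_const_mul' _ _ ofReal_ne_top, ENNReal.ofReal_mul (abs_nonneg _),
          mul_left_comm]
        gcongr
        exact ofReal_abs_Tk_le hK hφ hb hs hε x
    _ = ENNReal.ofReal (C / (2 * Real.log 2)) * ∫⁻ y in Ann n, ∫⁻ x in Metric.ball 0 R,
          ENNReal.ofReal |u x| * ENNReal.ofReal |hDir ε φ y x| := by
        rw [lintegral_const_mul' _ _ ofReal_ne_top, lintegral_lintegral_swap]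
        exact (hm2.comp measurable_swap).aemeasurable
    _ ≤ ENNReal.ofReal (C / (2 * Real.log 2)) * ∫⁻ y in Ann n, ENNReal.ofReal 3 * keL R δ u := by
        gcongr 1
        exact setLIntegral_mono' Ann_meas key
    _ = _ := by
        rw [setLIntegral_const, keA, show 3 * C / (2 * Real.log 2) = C / (2 * Real.log 2) * 3 by ring,
          ENNReal.ofReal_mul (by positivity)]
        ring

/-- The `L log L → L¹` bound for the truncated operators, by duality from `ke_pairing`. -/
lemma ke_op {R : ℝ} (hR : 0 < R) {ε : ℝ} (hε : 0 < ε)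
    {u : E n → ℝ} (hu : Measurable u) (hui : Integrable u) (hus : ∀ x, R ≤ ‖x‖ → u x = 0)
    {δ : ℝ} (hδ : 0 < δ) :
    ∫⁻ x in Metric.ball 0 R, ENNReal.ofReal |Tk K ε u x| ≤ keA n C * keL R δ u := by
  have hTm := Tk_measurable hK ε hu
  set φ : E n → ℝ := (Metric.ball 0 R).indicator
    (fun x => if 0 ≤ Tk K ε u x then (1 : ℝ) else -1) with hφd
  have hφ : Measurable φ :=
    (Measurable.ite (measurableSet_le measurable_const hTm) measurable_const
      measurable_const).indicator measurableSet_ball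
  have hφb : ∀ x, |φ x| ≤ 1 := by
    intro x
    simp only [hφd, indicator]
    split_ifs <;> simp
  have hφs : ∀ x, R ≤ ‖x‖ → φ x = 0 := by
    intro x hx
    apply indicator_of_notMem
    simpa using hx
  have hφi : Integrable φ := by
    refine integrable_of_bdd_supp (C := 1) hφ.aestronglyMeasurable (fun x => hφb x)
      (measurableSet_ball (x := (0 : E n)) (ε := R)) measure_ball_lt_top fun x hx => ?_
    exact indicator_of_notMem hx _
  have h1 : ∀ x, (Metric.ball 0 R).indicator (fun x => |Tk K ε u x|) x = Tk K ε u x * φ x := by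
    intro x
    simp only [hφd, indicator]
    split_ifs with h h'
    · rw [abs_of_nonneg h']; ring
    · rw [abs_of_neg (not_le.1 h')]; ring
    · simp
  have hTi : Integrable (fun x => Tk K ε u x * φ x) :=
    hφi.bdd_mul hTm.aestronglyMeasurable (ae_of_all _ fun x => Tk_bd hK hε hui x)
  have h2 : ∫⁻ x in Metric.ball 0 R, ENNReal.ofReal |Tk K ε u x| =
      ENNReal.ofReal (∫ x, Tk K ε u x * φ x) := by
    rw [ofReal_integral_eq_lintegral_ofReal hTi, ← lintegral_indicator measurableSet_ball]
    · congr 1; ext x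
      rw [← h1]
      by_cases hx : x ∈ Metric.ball (0 : E n) R <;> simp [hx]
    · refine ae_of_all _ fun x => ?_
      simp only [← h1, Pi.zero_apply]
      exact indicator_nonneg (fun _ _ => abs_nonneg _) _
  rw [h2, Tk_antisymm hK hε hui hφi]
  refine le_trans ?_ (ke_pairing hK hφ hφb hR hφs hε hu hδ)
  rw [← integral_neg]
  refine (ENNReal.ofReal_le_ofReal (le_abs_self _)).trans ?_
  rw [← Real.norm_eq_abs, ofReal_norm]
  refine (enorm_integral_le_lintegral_enorm _).trans ?_
  rw [← lintegral_indicator measurableSet_ball]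
  refine lintegral_mono fun x => ?_
  rw [← ofReal_norm, norm_neg, norm_mul, Real.norm_eq_abs, Real.norm_eq_abs]
  by_cases hx : x ∈ Metric.ball (0 : E n) R
  · simp [hx]
  · rw [hus x (by simpa using hx)]; simp
end
end

/-! ### Mean oscillations -/

section
variable {n : ℕ}

/-- The bell-shaped weight at scale `ε`, a dyadic sum of normalised indicators of balls; it is
comparable to `min (ε ^ (-n)) (ε ‖y‖ ^ (-n-1))`. -/
def wt (ε : ℝ) (y : E n) : ℝ≥0∞ :=
  ∑' k : ℕ, (2⁻¹ : ℝ≥0∞) ^ k * ((ENNReal.ofReal ((2 ^ k * ε) ^ n))⁻¹ *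
    (Metric.closedBall (0 : E n) (2 ^ k * ε)).indicator 1 y)

/-- The mean oscillation of `f` about `f x` with respect to the weight `wt ε`. -/
def Dosc (ε : ℝ) (f : E n → ℝ) (x : E n) : ℝ≥0∞ :=
  ∫⁻ y, ENNReal.ofReal |f (x - y) - f x| * wt ε y

/-- The unweighted mean oscillation over the ball of radius `r`, normalised by `r ^ n`. -/
def Mosc (r : ℝ) (f : E n → ℝ) (x : E n) : ℝ≥0∞ :=
  (ENNReal.ofReal (r ^ n))⁻¹ * ∫⁻ y in Metric.closedBall (0 : E n) r,
    ENNReal.ofReal |f (x - y) - f x|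

lemma wt_meas (ε : ℝ) : Measurable (wt (n := n) ε) := by
  refine Measurable.tsum fun k => (Measurable.const_mul ?_ _).const_mul _
  exact measurable_one.indicator measurableSet_closedBall

lemma inv_mul_vol {r : ℝ} (hr : 0 < r) :
    (ENNReal.ofReal (r ^ n))⁻¹ * volume (Metric.closedBall (0 : E n) r)
      = volume (Metric.closedBall (0 : E n) 1) := by
  rw [Measure.addHaar_closedBall' _ _ hr.le, finrank_euclideanSpace, Fintype.card_fin, ← mul_assoc,
    ENNReal.inv_mul_cancel, one_mul]
  · simpa using pow_pos hr n
  · exact ofReal_ne_top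

lemma lintegral_wt {ε : ℝ} (hε : 0 < ε) :
    ∫⁻ y : E n, wt ε y = 2 * volume (Metric.closedBall (0 : E n) 1) := by
  unfold wt
  rw [lintegral_tsum fun k => (((measurable_one.indicator
    measurableSet_closedBall).const_mul _).const_mul _).aemeasurable]
  have : ∀ k : ℕ, ∫⁻ y, (2⁻¹ : ℝ≥0∞) ^ k * ((ENNReal.ofReal ((2 ^ k * ε) ^ n))⁻¹ *
    (Metric.closedBall (0 : E n) (2 ^ k * ε)).indicator 1 y) =
    (2⁻¹ : ℝ≥0∞) ^ k * volume (Metric.closedBall (0 : E n) 1) := by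
    intro k
    rw [lintegral_const_mul _ ((measurable_one.indicator measurableSet_closedBall).const_mul _),
      lintegral_const_mul _ (measurable_one.indicator measurableSet_closedBall),
      lintegral_indicator_one measurableSet_closedBall, inv_mul_vol (by positivity)]
  simp_rw [this]
  rw [ENNReal.tsum_mul_right, ENNReal.tsum_geometric, ENNReal.one_sub_inv_two, inv_inv]

lemma lintegral_wt_lt_top {ε : ℝ} (hε : 0 < ε) : ∫⁻ y : E n, wt ε y < ⊤ := by
  rw [lintegral_wt hε]
  exact ENNReal.mul_lt_top (by simp) measure_closedBall_lt_top

lemma osc_meas {f : E n → ℝ} (hf : Measurable f) (x : E n) :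
    Measurable (fun y => ENNReal.ofReal |f (x - y) - f x|) := by fun_prop

lemma Dosc_meas {f : E n → ℝ} (hf : Measurable f) (ε : ℝ) : Measurable (Dosc ε f) := by
  have := wt_meas (n := n) ε
  have h : Measurable (fun p : E n × E n => ENNReal.ofReal |f (p.1 - p.2) - f p.1| * wt ε p.2) := by
    fun_prop
  exact h.lintegral_prod_right'

lemma Dosc_eq {f : E n → ℝ} (hf : Measurable f) (ε : ℝ) (x : E n) :
    Dosc ε f x = ∑' k : ℕ, (2⁻¹ : ℝ≥0∞) ^ k * Mosc (2 ^ k * ε) f x := by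
  unfold Dosc wt
  simp_rw [← ENNReal.tsum_mul_left]
  have hm := osc_meas hf x
  have hi : ∀ r : ℝ, Measurable ((Metric.closedBall (0 : E n) r).indicator (1 : E n → ℝ≥0∞)) :=
    fun r => measurable_one.indicator measurableSet_closedBall
  rw [lintegral_tsum fun k => by
    have := hi (2 ^ k * ε)
    fun_prop]
  congr 1; ext k
  unfold Mosc
  rw [← lintegral_indicator measurableSet_closedBall,
    ← lintegral_const_mul _ (hm.indicator measurableSet_closedBall),
    ← lintegral_const_mul _ ((hm.indicator measurableSet_closedBall).const_mul _)]
  congr 1; ext y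
  by_cases hy : y ∈ Metric.closedBall (0 : E n) (2 ^ k * ε)
  · simp only [hy, indicator_of_mem, Pi.one_apply]; ring
  · simp [hy]

lemma Dosc_le_of_bdd {f : E n → ℝ} {k : ℝ} (hk : ∀ x, |f x| ≤ k)
    {ε : ℝ} (hε : 0 < ε) (x : E n) :
    Dosc ε f x ≤ ENNReal.ofReal (2 * k) * (2 * volume (Metric.closedBall (0 : E n) 1)) := by
  rw [← lintegral_wt hε, ← lintegral_const_mul _ (wt_meas ε)]
  refine lintegral_mono fun y => ?_
  simp only []
  gcongr
  have h1 := hk (x - y); have h2 := hk x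
  have := abs_sub (f (x - y)) (f x)
  linarith

/-- Global bound for the mean oscillation of an integrable function; used for large `r` only. -/
lemma Mosc_le {f : E n → ℝ} {x : E n} {r : ℝ} (hr : 0 < r) :
    Mosc r f x ≤ (ENNReal.ofReal (r ^ n))⁻¹ * (∫⁻ y, ENNReal.ofReal |f y|) +
      ENNReal.ofReal |f x| * volume (Metric.closedBall (0 : E n) 1) := by
  rw [← inv_mul_vol hr, mul_left_comm, ← mul_add]
  unfold Mosc
  gcongr
  calc ∫⁻ y in Metric.closedBall (0 : E n) r, ENNReal.ofReal |f (x - y) - f x|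
      ≤ ∫⁻ y in Metric.closedBall (0 : E n) r,
          (ENNReal.ofReal |f (x - y)| + ENNReal.ofReal |f x|) := by
        refine lintegral_mono fun y => ?_
        rw [← ENNReal.ofReal_add (abs_nonneg _) (abs_nonneg _)]
        exact ENNReal.ofReal_le_ofReal (abs_sub _ _)
    _ = (∫⁻ y in Metric.closedBall (0 : E n) r, ENNReal.ofReal |f (x - y)|) +
          ENNReal.ofReal |f x| * volume (Metric.closedBall (0 : E n) r) := by
        rw [lintegral_add_right _ measurable_const, setLIntegral_const]
    _ ≤ _ := by
        gcongr ?_ + _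
        refine (setLIntegral_le_lintegral _ _).trans_eq ?_
        exact lintegral_sub_left_eq_self (fun y => ENNReal.ofReal |f y|) x

/-- Lebesgue differentiation theorem. -/
lemma tendsto_Mosc {f : E n → ℝ} (hf : Integrable f) :
    ∀ᵐ x, Tendsto (fun r => Mosc r f x) (𝓝[>] 0) (𝓝 0) := by
  filter_upwards [IsUnifLocDoublingMeasure.ae_tendsto_average_norm_sub volume
    hf.locallyIntegrable 1] with x hx
  have h1 := hx (l := 𝓝[>] (0 : ℝ)) (fun _ => x) (fun r => r) tendsto_id
    (by filter_upwards [self_mem_nhdsWithin] with r hr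
        simpa using (le_of_lt hr : (0 : ℝ) ≤ r))
  have h2 := (ENNReal.tendsto_ofReal h1)
  rw [ENNReal.ofReal_zero] at h2
  have h3 := ENNReal.Tendsto.const_mul h2 (a := volume (Metric.closedBall (0 : E n) 1))
    (Or.inr measure_closedBall_lt_top.ne)
  rw [mul_zero] at h3
  refine h3.congr' ?_
  filter_upwards [self_mem_nhdsWithin] with r (hr : 0 < r)
  have hi : IntegrableOn (fun y => ‖f y - f x‖) (Metric.closedBall x r) :=
    (hf.integrableOn.sub (integrableOn_const measure_closedBall_lt_top.ne)).norm
  have hv : volume (Metric.closedBall x r) ≠ 0 := (Metric.measure_closedBall_pos _ _ hr).ne'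
  rw [setAverage_eq, smul_eq_mul, ENNReal.ofReal_mul (by positivity),
    ofReal_integral_eq_lintegral_ofReal hi (ae_of_all _ fun _ => norm_nonneg _)]
  rw [measureReal_def, ENNReal.ofReal_inv_of_pos (ENNReal.toReal_pos hv
    measure_closedBall_lt_top.ne), ENNReal.ofReal_toReal measure_closedBall_lt_top.ne,
    ← inv_mul_vol hr, Mosc, mul_assoc]
  rw [Measure.addHaar_closedBall_center] at hv
  rw [Measure.addHaar_closedBall_center _ x]
  rw [← mul_assoc (volume _), ENNReal.mul_inv_cancel hv measure_closedBall_lt_top.ne, one_mul]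
  congr 1
  rw [← lintegral_indicator measurableSet_closedBall, ← lintegral_indicator measurableSet_closedBall,
    ← lintegral_sub_left_eq_self _ x]
  congr 1; ext y
  simp only [indicator, Metric.mem_closedBall, dist_eq_norm, sub_zero, sub_sub_cancel_left,
    norm_neg, Real.norm_eq_abs]

/-- At almost every point the weighted mean oscillation vanishes in the limit: dominated convergence
in the dyadic sum `Dosc_eq`. -/
lemma tendsto_Dosc {f : E n → ℝ} (hfm : Measurable f) (hf : Integrable f) :
    ∀ᵐ x, Tendsto (fun ε => Dosc ε f x) (𝓝[>] 0) (𝓝 0) := by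
  filter_upwards [tendsto_Mosc hf] with x hx
  obtain ⟨M, hM, hMb⟩ : ∃ M : ℝ≥0∞, M ≠ ⊤ ∧ ∀ r, 0 < r → Mosc r f x ≤ M := by
    have h1 := hx.eventually (gt_mem_nhds (show (0 : ℝ≥0∞) < 1 by simp))
    rw [eventually_nhdsWithin_iff, Metric.eventually_nhds_iff] at h1
    obtain ⟨r0, hr0, h1⟩ := h1
    have hI : ∫⁻ y, ENNReal.ofReal |f y| < ⊤ := hf.abs.lintegral_lt_top
    refine ⟨1 + ((ENNReal.ofReal (r0 ^ n))⁻¹ * (∫⁻ y, ENNReal.ofReal |f y|) +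
      ENNReal.ofReal |f x| * volume (Metric.closedBall (0 : E n) 1)), ?_, fun r hr => ?_⟩
    · refine ENNReal.add_ne_top.2 ⟨one_ne_top, ENNReal.add_ne_top.2 ⟨?_, ?_⟩⟩
      · refine ENNReal.mul_ne_top ?_ hI.ne
        simpa using pow_pos hr0 n
      · exact ENNReal.mul_ne_top ofReal_ne_top measure_closedBall_lt_top.ne
    · rcases lt_or_ge r r0 with h | h
      · refine (h1 (by rw [dist_zero_right, Real.norm_eq_abs, abs_of_pos hr]; exact h) hr).le.trans ?_
        exact le_self_add
      · refine (Mosc_le hr).trans (le_trans ?_ le_add_self)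
        gcongr
  simp_rw [Dosc_eq hfm, ← lintegral_count]
  have h0 : (0 : ℝ≥0∞) = ∫⁻ _ : ℕ, 0 ∂Measure.count := by simp
  rw [h0]
  refine tendsto_lintegral_filter_of_dominated_convergence (fun k => (2⁻¹ : ℝ≥0∞) ^ k * M)
    (Eventually.of_forall fun _ => measurable_of_countable _) ?_ ?_ (ae_of_all _ fun k => ?_)
  · filter_upwards [self_mem_nhdsWithin] with ε (hε : 0 < ε)
    refine ae_of_all _ fun k => ?_
    gcongr
    exact hMb _ (by positivity)
  · rw [lintegral_count, ENNReal.tsum_mul_right, ENNReal.tsum_geometric]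
    exact ENNReal.mul_ne_top (by simp) hM
  · have h1 : Tendsto (fun ε : ℝ => 2 ^ k * ε) (𝓝[>] 0) (𝓝[>] 0) := by
      refine tendsto_nhdsWithin_iff.2 ⟨?_, ?_⟩
      · have : Tendsto (fun ε : ℝ => 2 ^ k * ε) (𝓝 0) (𝓝 (2 ^ k * 0)) :=
          (continuous_const.mul continuous_id).tendsto 0
        rw [mul_zero] at this
        exact this.mono_left nhdsWithin_le_nhds
      · filter_upwards [self_mem_nhdsWithin] with ε (hε : 0 < ε)
        exact mem_Ioi.2 (by positivity)
    have h2 := ENNReal.Tendsto.const_mul (hx.comp h1) (a := (2⁻¹ : ℝ≥0∞) ^ k)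
      (Or.inr (by simp))
    rwa [mul_zero] at h2

/-- Lower bound for the weight near the origin. -/
lemma le_wt_small {ε : ℝ} (hε : 0 < ε) {y : E n} (k : ℕ) (hy : ‖y‖ ≤ 2 ^ k * ε) :
    ENNReal.ofReal ((2 ^ k)⁻¹ * ((2 ^ k * ε) ^ n)⁻¹) ≤ wt ε y := by
  refine le_trans (le_of_eq ?_) (ENNReal.le_tsum k)
  rw [indicator_of_mem (by simpa using hy), Pi.one_apply, mul_one,
    ENNReal.ofReal_mul (by positivity), ENNReal.ofReal_inv_of_pos (by positivity),
    ENNReal.ofReal_inv_of_pos (by positivity), ENNReal.ofReal_pow (by norm_num),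
    ENNReal.inv_pow]
  simp

/-- Lower bound for the weight away from the origin. -/
lemma le_wt_large {ε : ℝ} (hε : 0 < ε) {y : E n} (hy : ε ≤ ‖y‖) :
    ENNReal.ofReal (ε / (2 * ‖y‖) ^ (n + 1)) ≤ wt ε y := by
  obtain ⟨k, hk1, hk2⟩ : ∃ k : ℕ, ‖y‖ ≤ 2 ^ k * ε ∧ 2 ^ k * ε ≤ 2 * ‖y‖ := by
    obtain ⟨m, hm1, hm2⟩ := exists_nat_pow_near (x := ‖y‖ / ε) (y := 2)
      ((one_le_div hε).2 hy) (by norm_num)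
    rw [le_div_iff₀ hε] at hm1
    rw [div_lt_iff₀ hε] at hm2
    exact ⟨m + 1, hm2.le, by rw [pow_succ]; linarith⟩
  refine le_trans (ENNReal.ofReal_le_ofReal ?_) (le_wt_small hε k hk1)
  have : (2 ^ k)⁻¹ * ((2 ^ k * ε) ^ n)⁻¹ = ε / (2 ^ k * ε) ^ (n + 1) := by
    rw [pow_succ]; field_simp
  rw [this]
  gcongr

end

/-! ### The mollifier and the regularised kernel -/

section
variable {n : ℕ}

/-- Normalising constant of the mollifier. -/
def mc (n : ℕ) : ℝ := (∫ x : E n, max (1 - ‖x‖) 0)⁻¹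

/-- The tent-shaped mollifier at scale `ε`. -/
def psi (ε : ℝ) (x : E n) : ℝ := mc n * max (1 - ‖x‖ / ε) 0 / ε ^ n

lemma tent_integrable : Integrable (fun x : E n => max (1 - ‖x‖) 0) := by
  refine integrable_of_bdd_supp (C := 1) (Continuous.aestronglyMeasurable (by fun_prop))
    (fun x => ?_) (measurableSet_closedBall (x := (0 : E n)) (ε := 1))
    measure_closedBall_lt_top fun x hx => ?_
  · rw [Real.norm_eq_abs, abs_of_nonneg (le_max_right _ _)]
    exact max_le (by linarith [norm_nonneg x]) (by norm_num)
  · rw [mem_closedBall_zero_iff, not_le] at hx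
    exact max_eq_right (by linarith)

lemma tent_pos : 0 < ∫ x : E n, max (1 - ‖x‖) 0 := by
  rw [integral_pos_iff_support_of_nonneg (f := fun x : E n => max (1 - ‖x‖) 0)
    (fun x => le_max_right _ _) tent_integrable]
  refine lt_of_lt_of_le (Metric.measure_ball_pos volume (0 : E n) one_pos) (measure_mono ?_)
  intro x hx
  rw [mem_ball_zero_iff] at hx
  rw [Function.mem_support]
  exact (lt_max_of_lt_left (by linarith)).ne'

lemma mc_pos : 0 < mc n := inv_pos.2 tent_pos

lemma psi_meas (ε : ℝ) : Measurable (psi (n := n) ε) := by unfold psi; fun_prop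

lemma psi_nonneg {ε : ℝ} (hε : 0 < ε) (x : E n) : 0 ≤ psi ε x := by
  have := mc_pos (n := n)
  have := le_max_right (1 - ‖x‖ / ε) 0
  unfold psi; positivity

lemma psi_le {ε : ℝ} (hε : 0 < ε) (x : E n) : psi ε x ≤ mc n / ε ^ n := by
  have := mc_pos (n := n)
  unfold psi
  gcongr
  refine mul_le_of_le_one_right this.le (max_le ?_ (by norm_num))
  have : 0 ≤ ‖x‖ / ε := by positivity
  linarith

lemma psi_supp {ε : ℝ} (hε : 0 < ε) {x : E n} (hx : ε ≤ ‖x‖) : psi ε x = 0 := by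
  unfold psi
  rw [max_eq_right]
  · simp
  · have := (one_le_div hε).2 hx
    linarith

lemma psi_neg (ε : ℝ) (x : E n) : psi ε (-x) = psi ε x := by unfold psi; rw [norm_neg]

lemma psi_lip {ε : ℝ} (hε : 0 < ε) (x y : E n) :
    |psi ε x - psi ε y| ≤ mc n / ε ^ (n + 1) * ‖x - y‖ := by
  have hm := mc_pos (n := n)
  have h1 : psi ε x - psi ε y = mc n / ε ^ n * (max (1 - ‖x‖ / ε) 0 - max (1 - ‖y‖ / ε) 0) := by
    unfold psi; ring
  have h2 : |max (1 - ‖x‖ / ε) 0 - max (1 - ‖y‖ / ε) 0| ≤ ‖x - y‖ / ε := by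
    refine (abs_max_sub_max_le_abs _ _ _).trans ?_
    rw [show 1 - ‖x‖ / ε - (1 - ‖y‖ / ε) = (‖y‖ - ‖x‖) / ε by ring, abs_div, abs_of_pos hε]
    gcongr
    rw [norm_sub_rev]
    exact abs_norm_sub_norm_le _ _
  rw [h1, abs_mul, abs_of_pos (by positivity)]
  calc _ ≤ mc n / ε ^ n * (‖x - y‖ / ε) := by gcongr
    _ = _ := by rw [pow_succ]; field_simp

lemma psi_integrable {ε : ℝ} (hε : 0 < ε) : Integrable (psi (n := n) ε) := by
  refine integrable_of_bdd_supp (C := mc n / ε ^ n) (psi_meas ε).aestronglyMeasurable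
    (fun x => ?_) (measurableSet_closedBall (x := (0 : E n)) (ε := ε))
    measure_closedBall_lt_top fun x hx => ?_
  · rw [Real.norm_eq_abs, abs_of_nonneg (psi_nonneg hε x)]
    exact psi_le hε x
  · rw [mem_closedBall_zero_iff, not_le] at hx
    exact psi_supp hε hx.le

lemma integral_psi {ε : ℝ} (hε : 0 < ε) : ∫ x : E n, psi ε x = 1 := by
  have h := Measure.integral_comp_smul (volume : Measure (E n)) (fun x => max (1 - ‖x‖) 0) ε⁻¹
  have h1 : ∀ x : E n, psi ε x = mc n / ε ^ n * max (1 - ‖ε⁻¹ • x‖) 0 := by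
    intro x
    rw [norm_smul, Real.norm_eq_abs, abs_inv, abs_of_pos hε]
    unfold psi
    rw [div_eq_inv_mul ‖x‖]; ring
  simp_rw [h1]
  rw [integral_const_mul, h, finrank_euclideanSpace, Fintype.card_fin, smul_eq_mul, mc]
  have := tent_pos (n := n)
  rw [abs_of_pos (by positivity), inv_pow, inv_inv]
  field_simp

lemma psi_le_wt {ε : ℝ} (hε : 0 < ε) (x : E n) :
    ENNReal.ofReal (psi ε x) ≤ ENNReal.ofReal (mc n) * wt ε x := by
  have hm := mc_pos (n := n)
  rcases le_or_gt ε ‖x‖ with h | h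
  · rw [psi_supp hε h]; simp
  · have h1 := le_wt_small hε (y := x) 0 (by simpa using h.le)
    refine (ENNReal.ofReal_le_ofReal (psi_le hε x)).trans ?_
    rw [div_eq_mul_inv, ENNReal.ofReal_mul hm.le]
    gcongr
    simpa using h1

/-- The constant in `∫_{‖u‖ ≤ r} ‖u‖ ^ (1 - n) = c r`. -/
def cJ (n : ℕ) : ℝ := ∫ u : E n, if ‖u‖ ≤ 1 then ‖u‖ / ‖u‖ ^ n else 0

/-- The radial function `‖u‖ ^ (1 - n)` is integrable on balls, with integral proportional to the
radius. -/
lemma radial_integrable (hn : 0 < n) (r : ℝ) :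
    Integrable (fun u : E n => if ‖u‖ ≤ r then ‖u‖ / ‖u‖ ^ n else 0) := by
  have : Nontrivial (E n) := by
    have := Fin.pos_iff_nonempty.1 hn
    infer_instance
  rw [integrable_fun_norm_addHaar volume (f := fun t : ℝ => if t ≤ r then t / t ^ n else 0)]
  rw [finrank_euclideanSpace, Fintype.card_fin]
  have h : IntegrableOn ((Iic r).indicator fun _ => (1 : ℝ)) (Ioi 0) := by
    rw [IntegrableOn, integrable_indicator_iff measurableSet_Iic, IntegrableOn,
      Measure.restrict_restrict measurableSet_Iic, Iic_inter_Ioi]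
    exact integrableOn_const (by simp)
  refine h.congr_fun (fun t (ht : 0 < t) => ?_) measurableSet_Ioi
  simp only [indicator, mem_Iic, smul_eq_mul]
  split_ifs
  · obtain ⟨m, rfl⟩ := Nat.exists_eq_succ_of_ne_zero hn.ne'
    simp only [Nat.succ_eq_add_one, Nat.add_sub_cancel, pow_succ]
    field_simp
  · simp

lemma radial_integral {r : ℝ} (hr : 0 < r) :
    ∫ u : E n, (if ‖u‖ ≤ r then ‖u‖ / ‖u‖ ^ n else 0) = cJ n * r := by
  have h := Measure.integral_comp_smul (volume : Measure (E n))
    (fun u => if ‖u‖ ≤ 1 then ‖u‖ / ‖u‖ ^ n else 0) r⁻¹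
  have h1 : ∀ u : E n, (if ‖r⁻¹ • u‖ ≤ 1 then ‖r⁻¹ • u‖ / ‖r⁻¹ • u‖ ^ n else 0) =
      r ^ n / r * (if ‖u‖ ≤ r then ‖u‖ / ‖u‖ ^ n else 0) := by
    intro u
    rw [norm_smul, Real.norm_eq_abs, abs_inv, abs_of_pos hr]
    have : r⁻¹ * ‖u‖ ≤ 1 ↔ ‖u‖ ≤ r := by rw [inv_mul_le_iff₀ hr, mul_one]
    simp only [this]
    split_ifs
    · rw [mul_pow, inv_pow]; field_simp
    · simp
  simp_rw [h1] at h
  rw [integral_const_mul, finrank_euclideanSpace, Fintype.card_fin, smul_eq_mul,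
    abs_of_pos (by positivity), inv_pow, inv_inv] at h
  rw [cJ]
  field_simp at h
  linarith

lemma cJ_nonneg : 0 ≤ cJ n := by
  refine integral_nonneg fun u => ?_
  simp only [Pi.zero_apply]
  split_ifs <;> positivity

/-- The constant bounding the difference of the truncated kernel and its regularisation. -/
def cEta (n : ℕ) (C : ℝ) : ℝ := (C + 3 * C * mc n * cJ n) * 2 ^ (n + 1) + C * 2 ^ (n + 1)

section
variable {K : E n → ℝ} {C : ℝ} (hK : GoodK K C)
include hK

/-- Size of the regularised kernel near the origin. Oddness of `K` lets one replace `psi ε (y - u)`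
by half the difference `psi ε (y - u) - psi ε (y + u)`, and the Lipschitz bound on `psi` then makes the
singularity of `K` integrable, uniformly in `δ`. -/
lemma Tk_psi_bd {ε δ : ℝ} (hε : 0 < ε) (hδ : 0 < δ) {y : E n} (hy : ‖y‖ ≤ 2 * ε) :
    |Tk K δ (psi ε) y| ≤ 3 * C * mc n * cJ n / ε ^ n := by
  have hC := hK.pos
  have hm := mc_pos (n := n)
  have hi := Tk_integrable' hK hδ (psi_integrable (n := n) hε) y
  have e1 : Tk K δ (psi ε) y = -∫ u, Ke K δ u * psi ε (y + u) := by
    unfold Tk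
    rw [← integral_neg_eq_self, ← integral_neg]
    congr 1; ext u
    rw [Ke_odd hK, sub_neg_eq_add]; ring
  have hi' : Integrable (fun u => Ke K δ u * psi ε (y + u)) := by
    have := hi.comp_neg.neg
    refine this.congr (ae_of_all _ fun u => ?_)
    simp only [Pi.neg_apply, Ke_odd hK, sub_neg_eq_add]; ring
  have e2 : 2 * Tk K δ (psi ε) y = ∫ u, Ke K δ u * (psi ε (y - u) - psi ε (y + u)) := by
    have : ∫ u, Ke K δ u * (psi ε (y - u) - psi ε (y + u)) =
        (∫ u, Ke K δ u * psi ε (y - u)) - ∫ u, Ke K δ u * psi ε (y + u) := by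
      rw [← integral_sub hi hi']; congr 1; ext u; ring
    rw [this]
    have e0 : Tk K δ (psi ε) y = ∫ u, Ke K δ u * psi ε (y - u) := rfl
    linarith
  have hbd : |∫ u, Ke K δ u * (psi ε (y - u) - psi ε (y + u))| ≤
      ∫ u : E n, C * (mc n / ε ^ (n + 1) * 2) *
        (if ‖u‖ ≤ 3 * ε then ‖u‖ / ‖u‖ ^ n else 0) := by
    rw [← Real.norm_eq_abs]
    refine norm_integral_le_of_norm_le ((radial_integrable hK.dim _).const_mul _)
      (ae_of_all _ fun u => ?_)
    rw [norm_mul, Real.norm_eq_abs, Real.norm_eq_abs]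
    split_ifs with hu
    · unfold Ke
      split_ifs with hd
      · have hu0 : 0 < ‖u‖ := hδ.trans hd
        have h1 : |K u| ≤ C / ‖u‖ ^ n := by
          rw [le_div_iff₀ (by positivity)]; exact hK.bd u
        have h2 := psi_lip hε (y - u) (y + u)
        have h3 : ‖y - u - (y + u)‖ ≤ 2 * ‖u‖ := by
          rw [show y - u - (y + u) = -(u + u) by abel, norm_neg]
          linarith [norm_add_le u u]
        calc _ ≤ C / ‖u‖ ^ n * (mc n / ε ^ (n + 1) * (2 * ‖u‖)) := by
              refine mul_le_mul h1 (h2.trans ?_) (abs_nonneg _) (by positivity)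
              gcongr
          _ = _ := by ring
      · simp; positivity
    · rw [not_le] at hu
      have h1 : psi ε (y - u) = 0 := by
        apply psi_supp hε
        have := norm_sub_norm_le u y
        rw [norm_sub_rev]; linarith
      have h2 : psi ε (y + u) = 0 := by
        apply psi_supp hε
        have := norm_sub_norm_le u (-y)
        rw [norm_neg, sub_neg_eq_add, add_comm u] at this; linarith
      simp [h1, h2]
  rw [← e2, integral_const_mul, radial_integral (by positivity), abs_mul, abs_two] at hbd
  have : C * (mc n / ε ^ (n + 1) * 2) * (cJ n * (3 * ε)) =
      2 * (3 * C * mc n * cJ n / ε ^ n) := by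
    rw [pow_succ]; field_simp
  linarith

/-- The truncated kernel at scale `ε` differs from the mollification at scale `ε` of the kernel
truncated at a smaller scale `δ` by at most a multiple of the weight `wt ε`. -/
lemma eta_bd {ε δ : ℝ} (hδ : 0 < δ) (hδε : δ ≤ ε) (y : E n) :
    ENNReal.ofReal |Ke K ε y - Tk K δ (psi ε) y| ≤ ENNReal.ofReal (cEta n C) * wt ε y := by
  have hε : 0 < ε := hδ.trans_le hδε
  have hC := hK.pos
  have hm := mc_pos (n := n)
  have hJ := cJ_nonneg (n := n)
  rcases le_or_gt ‖y‖ (2 * ε) with hy | hy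
  · have h1 := le_wt_small hε (y := y) 1 (by simpa using hy)
    refine le_trans ?_ (mul_le_mul_right h1 _)
    rw [← ENNReal.ofReal_mul (by unfold cEta; positivity)]
    apply ENNReal.ofReal_le_ofReal
    have h2 := Ke_bd hK hε y
    have h3 := Tk_psi_bd hK hε hδ hy
    have h4 := abs_sub (Ke K ε y) (Tk K δ (psi ε) y)
    have h5 : (C + 3 * C * mc n * cJ n) * 2 ^ (n + 1) * ((2 ^ 1)⁻¹ * ((2 ^ 1 * ε) ^ n)⁻¹)
        = C / ε ^ n + 3 * C * mc n * cJ n / ε ^ n := by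
      rw [mul_pow, pow_succ]; field_simp
    have h6 : 0 ≤ C * 2 ^ (n + 1) * ((2 ^ 1)⁻¹ * ((2 ^ 1 * ε) ^ n)⁻¹) := by positivity
    rw [cEta, add_mul]
    linarith
  · have h1 := le_wt_large hε (y := y) (by linarith)
    refine le_trans ?_ (mul_le_mul_right h1 _)
    rw [← ENNReal.ofReal_mul (by unfold cEta; positivity)]
    apply ENNReal.ofReal_le_ofReal
    have hy0 : 0 < ‖y‖ := by linarith
    -- Away from the origin `psi` has integral one and the kernel is Lipschitz.
    have e1 : Ke K ε y - Tk K δ (psi ε) y = ∫ z, (K y - Ke K δ (y - z)) * psi ε z := by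
      have : ∀ z, (K y - Ke K δ (y - z)) * psi ε z = K y * psi ε z - Ke K δ (y - z) * psi ε z :=
        fun z => by ring
      simp_rw [this]
      rw [integral_sub ((psi_integrable hε).const_mul _) (Tk_integrable hK hδ (psi_integrable hε) y),
        integral_const_mul, integral_psi hε, ← Tk_eq_conv, mul_one]
      simp [Ke, show ε < ‖y‖ by linarith]
    have hb : |∫ z, (K y - Ke K δ (y - z)) * psi ε z| ≤
        ∫ z : E n, C * ε / ‖y‖ ^ (n + 1) * psi ε z := by
      rw [← Real.norm_eq_abs]
      refine norm_integral_le_of_norm_le ((psi_integrable hε).const_mul _) (ae_of_all _ fun z => ?_)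
      rw [norm_mul, Real.norm_eq_abs, Real.norm_eq_abs, abs_of_nonneg (psi_nonneg hε z)]
      rcases le_or_gt ε ‖z‖ with hz | hz
      · rw [psi_supp hε hz]; simp
      · have h2 : δ < ‖y - z‖ := by
          have := norm_sub_norm_le y z; linarith
        have h3 := hK.smooth y z (norm_pos_iff.1 hy0) (by linarith)
        refine mul_le_mul_of_nonneg_right ?_ (psi_nonneg hε z)
        rw [Ke, if_pos h2, abs_sub_comm, le_div_iff₀ (by positivity)]
        exact h3.trans (by gcongr)
    rw [e1]
    rw [integral_const_mul, integral_psi hε, mul_one] at hb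
    refine hb.trans ?_
    have h5 : C * 2 ^ (n + 1) * (ε / (2 * ‖y‖) ^ (n + 1)) = C * ε / ‖y‖ ^ (n + 1) := by
      rw [mul_pow]; field_simp
    have h6 : 0 ≤ (C + 3 * C * mc n * cJ n) * 2 ^ (n + 1) * (ε / (2 * ‖y‖) ^ (n + 1)) := by
      positivity
    rw [cEta, add_mul]
    linarith
end
end

/-! ### Truncation versus mollification -/

section
variable {n : ℕ}

/-- The mollification of `f` at scale `ε`. -/
def moll (ε : ℝ) (f : E n → ℝ) (x : E n) : ℝ := ∫ z, psi ε z * f (x - z)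

lemma moll_meas (ε : ℝ) {f : E n → ℝ} (hf : Measurable f) : Measurable (moll ε f) := by
  have : Measurable (fun q : E n × E n => psi ε q.2 * f (q.1 - q.2)) := by
    have := psi_meas (n := n) ε
    fun_prop
  exact this.stronglyMeasurable.integral_prod_right.measurable

lemma psi_mul_integrable {ε : ℝ} (hε : 0 < ε) {f : E n → ℝ} (hf : Integrable f) (x : E n) :
    Integrable (fun z => psi ε z * f (x - z)) := by
  refine (hf.comp_sub_left x).bdd_mul (c := mc n / ε ^ n) (psi_meas ε).aestronglyMeasurable
    (ae_of_all _ fun z => ?_)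
  rw [Real.norm_eq_abs, abs_of_nonneg (psi_nonneg hε z)]
  exact psi_le hε z

/-- Mollification moves `f` by at most a multiple of its mean oscillation. -/
lemma moll_sub_le {ε : ℝ} (hε : 0 < ε) {f : E n → ℝ} (hf : Integrable f) (x : E n) :
    ENNReal.ofReal |moll ε f x - f x| ≤ ENNReal.ofReal (mc n) * Dosc ε f x := by
  have e : moll ε f x - f x = ∫ z, psi ε z * (f (x - z) - f x) := by
    simp_rw [mul_sub]
    rw [integral_sub (psi_mul_integrable hε hf x) ((psi_integrable hε).mul_const _),
      integral_mul_const, integral_psi hε, one_mul, moll]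
  rw [e, ← Real.norm_eq_abs, ofReal_norm, Dosc]
  refine (enorm_integral_le_lintegral_enorm _).trans ?_
  rw [← lintegral_const_mul' _ _ ofReal_ne_top]
  refine lintegral_mono fun z => ?_
  rw [← ofReal_norm, norm_mul, Real.norm_eq_abs, Real.norm_eq_abs,
    abs_of_nonneg (psi_nonneg hε z), ENNReal.ofReal_mul (psi_nonneg hε z), mul_left_comm, mul_comm]
  gcongr
  exact psi_le_wt hε z

lemma moll_abs_le {ε : ℝ} (hε : 0 < ε) {f : E n → ℝ} {k : ℝ} (hk : ∀ x, |f x| ≤ k) (x : E n) :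
    |moll ε f x| ≤ k := by
  rw [moll, ← Real.norm_eq_abs]
  refine (norm_integral_le_of_norm_le ((psi_integrable hε).mul_const k)
    (ae_of_all _ fun z => ?_)).trans ?_
  · rw [norm_mul, Real.norm_eq_abs, Real.norm_eq_abs, abs_of_nonneg (psi_nonneg hε z)]
    exact mul_le_mul_of_nonneg_left (hk _) (psi_nonneg hε z)
  · rw [integral_mul_const, integral_psi hε, one_mul]

lemma moll_supp {ε : ℝ} (hε : 0 < ε) {f : E n → ℝ} {R : ℝ} (hf : ∀ x, R ≤ ‖x‖ → f x = 0)
    {x : E n} (hx : R + ε ≤ ‖x‖) : moll ε f x = 0 := by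
  rw [moll, integral_eq_zero_of_ae]
  refine ae_of_all _ fun z => ?_
  simp only [Pi.zero_apply]
  rcases le_or_gt ε ‖z‖ with hz | hz
  · rw [psi_supp hε hz, zero_mul]
  · rw [hf, mul_zero]
    have := norm_sub_norm_le x z
    linarith

section
variable {K : E n → ℝ} {C : ℝ} (hK : GoodK K C)
include hK

/-- Mollifying `T_δ f` amounts to integrating `f` against the regularised kernel `T_δ psi`; this is
antisymmetry applied to `psi` and a reflected translate of `f`. -/
lemma integral_psi_mul_Tk {ε δ : ℝ} (hε : 0 < ε) (hδ : 0 < δ) {f : E n → ℝ} (hf : Integrable f)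
    (x : E n) :
    ∫ z, psi ε z * Tk K δ f (x - z) = ∫ y, Tk K δ (psi ε) y * f (x - y) := by
  rw [Tk_antisymm hK hδ (psi_integrable hε) (hf.comp_sub_left x), ← integral_neg]
  congr 1; ext z
  rw [← mul_neg]
  congr 1
  unfold Tk
  rw [← integral_neg_eq_self, ← integral_neg]
  congr 1; ext u
  rw [Ke_odd hK, show x - z - -u = x - (z - u) by abel]
  ring

/-- Mollification commutes with the truncated singular integral, by Fubini's theorem. -/
lemma Tk_moll {ε δ : ℝ} (hε : 0 < ε) (hδ : 0 < δ) {f : E n → ℝ} (hf : Integrable f)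
    (x : E n) :
    Tk K δ (moll ε f) x = ∫ y, Tk K δ (psi ε) y * f (x - y) := by
  rw [← integral_psi_mul_Tk hK hε hδ hf]
  have h1 := (psi_integrable (n := n) hε).convolution_integrand (ContinuousLinearMap.mul ℝ ℝ) hf
    (μ := volume)
  have h2 := (((Measure.measurePreserving_sub_left volume x).prod
    (MeasurePreserving.id (volume : Measure (E n)))).integrable_comp h1.aestronglyMeasurable).2 h1
  have h3 : Integrable (Function.uncurry fun u z : E n => Ke K δ u * (psi ε z * f (x - u - z)))
      (volume.prod volume) := by
    refine h2.bdd_mul (f := fun p : E n × E n => Ke K δ p.1) (c := C / δ ^ n) ?_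
      (ae_of_all _ fun p => Ke_bd hK hδ _)
    exact ((Ke_meas hK δ).comp measurable_fst).aestronglyMeasurable
  have h4 := integral_integral_swap h3
  calc Tk K δ (moll ε f) x = ∫ u, ∫ z, Ke K δ u * (psi ε z * f (x - u - z)) := by
        unfold Tk moll
        simp_rw [integral_const_mul]
    _ = ∫ z, ∫ u, Ke K δ u * (psi ε z * f (x - u - z)) := h4
    _ = _ := by
        congr 1; ext z
        unfold Tk
        rw [← integral_const_mul]
        congr 1; ext u
        rw [sub_right_comm]; ring

/-- The truncated singular integral at scale `ε` is, up to the oscillation of `f` at scale `ε`,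
the mollification at scale `ε` of the singular integral truncated at any smaller scale. -/
lemma Tk_sub_le {ε δ : ℝ} (hδ : 0 < δ) (hδε : δ ≤ ε) {f : E n → ℝ}
    (hf : Integrable f) (x : E n) :
    ENNReal.ofReal |Tk K ε f x - ∫ y, Tk K δ (psi ε) y * f (x - y)| ≤
      ENNReal.ofReal (cEta n C) * Dosc ε f x := by
  have hε : 0 < ε := hδ.trans_le hδε
  have hTm := Tk_measurable hK δ (psi_meas (n := n) ε)
  set η : E n → ℝ := fun y => Ke K ε y - Tk K δ (psi ε) y with hη
  have hηm : Measurable η := (Ke_meas hK ε).sub hTm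
  have hηi : Integrable η := by
    refine ⟨hηm.aestronglyMeasurable, ?_⟩
    have : ∫⁻ y, ‖η y‖ₑ ≤ ENNReal.ofReal (cEta n C) * ∫⁻ y : E n, wt ε y := by
      rw [← lintegral_const_mul' _ _ ofReal_ne_top]
      refine lintegral_mono fun y => ?_
      rw [← ofReal_norm, Real.norm_eq_abs]
      exact eta_bd hK hδ hδε y
    exact this.trans_lt (ENNReal.mul_lt_top ofReal_lt_top (lintegral_wt_lt_top hε))
  have hη0 : ∫ y, η y = 0 := by
    have h1 : ∫ y, η y = -∫ y, η y := by
      conv_lhs => rw [← integral_neg_eq_self]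
      rw [← integral_neg]
      congr 1; ext y
      simp only [hη]
      have : Tk K δ (psi ε) (-y) = -Tk K δ (psi ε) y := by
        unfold Tk
        rw [← integral_neg_eq_self, ← integral_neg]
        congr 1; ext u
        rw [Ke_odd hK, ← psi_neg, show -(-y - -u) = y - u by abel]; ring
      rw [this, Ke_odd hK]; ring
    linarith
  have i2 : Integrable (fun y => Tk K δ (psi ε) y * f (x - y)) :=
    (hf.comp_sub_left x).bdd_mul hTm.aestronglyMeasurable
      (ae_of_all _ fun y => Tk_bd hK hδ (psi_integrable hε) y)
  have e : Tk K ε f x - ∫ y, Tk K δ (psi ε) y * f (x - y) =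
      ∫ y, η y * (f (x - y) - f x) := by
    have i1 := Tk_integrable' hK hε hf x
    have h1 : ∀ y, η y * (f (x - y) - f x) =
        (Ke K ε y * f (x - y) - Tk K δ (psi ε) y * f (x - y)) - η y * f x := by
      intro y; simp only [hη]; ring
    have i3 : Integrable (fun y => Ke K ε y * f (x - y) - Tk K δ (psi ε) y * f (x - y)) :=
      i1.sub i2
    simp_rw [h1]
    rw [integral_sub i3 (hηi.mul_const _), integral_mul_const, hη0, zero_mul, sub_zero,
      integral_sub i1 i2]
    rfl
  rw [e, ← Real.norm_eq_abs, ofReal_norm, Dosc]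
  refine (enorm_integral_le_lintegral_enorm _).trans ?_
  rw [← lintegral_const_mul' _ _ ofReal_ne_top]
  refine lintegral_mono fun y => ?_
  rw [← ofReal_norm, norm_mul, Real.norm_eq_abs, Real.norm_eq_abs,
    ENNReal.ofReal_mul (abs_nonneg _), mul_left_comm, mul_comm]
  gcongr
  exact eta_bd hK hδ hδε y

/-- Quantitative Cauchy estimate in `L¹` of a ball for bounded functions. -/
lemma Tk_cauchy_bdd {h : E n → ℝ} (hm : Measurable h) {k : ℝ} (hk : ∀ x, |h x| ≤ k) {R : ℝ}
    (hR : 0 < R) (hs : ∀ x, R ≤ ‖x‖ → h x = 0) {ε δ d : ℝ} (hδ : 0 < δ) (hδε : δ ≤ ε)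
    (hε1 : ε ≤ 1) (hd : 0 < d) :
    ∫⁻ x in Metric.ball 0 (R + 1), ENNReal.ofReal |Tk K ε h x - Tk K δ h x| ≤
      ENNReal.ofReal (cEta n C) * (∫⁻ x in Metric.ball 0 (R + 1), Dosc ε h x) +
      keA n C * (ENNReal.ofReal (mc n * Real.log (max (2 * k / d) 1)) *
        (∫⁻ x in Metric.ball 0 (R + 1), Dosc ε h x) + ENNReal.ofReal d * slC n (R + 1)) := by
  have hε : 0 < ε := hδ.trans_le hδε
  have hmc := mc_pos (n := n)
  have hi : Integrable h := integrable_of_bdd_supp (C := k) hm.aestronglyMeasurable (fun x => hk x)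
    (measurableSet_ball (x := (0 : E n)) (ε := R)) measure_ball_lt_top
    fun x hx => hs x (by simpa using hx)
  have hmm := moll_meas ε hm
  have hms : ∀ x, R + 1 ≤ ‖x‖ → moll ε h x = 0 := fun x hx => moll_supp hε hs (by linarith)
  have hmi : Integrable (moll ε h) :=
    integrable_of_bdd_supp (C := k) hmm.aestronglyMeasurable
    (fun x => moll_abs_le hε hk x)
    (measurableSet_ball (x := (0 : E n)) (ε := R + 1)) measure_ball_lt_top
    fun x hx => hms x (by simpa using hx)
  set u : E n → ℝ := fun x => moll ε h x - h x with hu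
  have hum : Measurable u := hmm.sub hm
  have hD := Dosc_meas hm ε
  -- The remainder `T_δ (moll ε h - h)` is small by the `L log L` bound, since `moll ε h - h` is
  -- bounded by `2 k` and small in `L¹`.
  have key := ke_op hK (R := R + 1) (by linarith) hδ hum (hmi.sub hi)
    (fun x hx => by simp only [hu]; rw [hms x hx, hs x (by linarith), sub_zero]) hd
  have hL : keL (R + 1) d u ≤ ENNReal.ofReal (mc n * Real.log (max (2 * k / d) 1)) *
        (∫⁻ x in Metric.ball 0 (R + 1), Dosc ε h x) + ENNReal.ofReal d * slC n (R + 1) := by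
    unfold keL
    gcongr ?_ + _
    rw [← lintegral_const_mul' _ _ ofReal_ne_top]
    refine lintegral_mono fun x => ?_
    have hl : 0 ≤ Real.log (max (2 * k / d) 1) := Real.log_nonneg (le_max_right _ _)
    have h1 : |u x| ≤ 2 * k := by
      have h1 := moll_abs_le hε hk x
      have h2 := hk x
      have := abs_sub (moll ε h x) (h x)
      simp only [hu]; linarith
    calc ENNReal.ofReal (|u x| * Real.log (max (|u x| / d) 1))
        ≤ ENNReal.ofReal (|u x| * Real.log (max (2 * k / d) 1)) := by
          apply ENNReal.ofReal_le_ofReal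
          gcongr
      _ = ENNReal.ofReal |u x| * ENNReal.ofReal (Real.log (max (2 * k / d) 1)) :=
          ENNReal.ofReal_mul (abs_nonneg _)
      _ ≤ ENNReal.ofReal (mc n) * Dosc ε h x * ENNReal.ofReal (Real.log (max (2 * k / d) 1)) := by
          gcongr
          exact moll_sub_le hε hi x
      _ = _ := by rw [ENNReal.ofReal_mul hmc.le]; ring
  calc ∫⁻ x in Metric.ball 0 (R + 1), ENNReal.ofReal |Tk K ε h x - Tk K δ h x|
      ≤ ∫⁻ x in Metric.ball 0 (R + 1), (ENNReal.ofReal (cEta n C) * Dosc ε h x +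
          ENNReal.ofReal |Tk K δ u x|) := by
        refine lintegral_mono fun x => ?_
        have h1 := Tk_sub_le hK hδ hδε hi x
        rw [← Tk_moll hK hε hδ hi] at h1
        have h2 : Tk K ε h x - Tk K δ h x = (Tk K ε h x - Tk K δ (moll ε h) x) + Tk K δ u x := by
          simp only [hu]; rw [Tk_sub hK hδ hmi hi]; ring
        rw [h2]
        refine (ENNReal.ofReal_le_ofReal (abs_add_le _ _)).trans ?_
        rw [ENNReal.ofReal_add (abs_nonneg _) (abs_nonneg _)]
        gcongr
    _ = ENNReal.ofReal (cEta n C) * (∫⁻ x in Metric.ball 0 (R + 1), Dosc ε h x) +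
          ∫⁻ x in Metric.ball 0 (R + 1), ENNReal.ofReal |Tk K δ u x| := by
        rw [lintegral_add_left (hD.const_mul _), lintegral_const_mul _ hD]
    _ ≤ _ := by
        gcongr
        exact key.trans (by gcongr)

end

/-- Integrated form of `tendsto_Dosc` for bounded functions. -/
lemma tendsto_lintegral_Dosc {h : E n → ℝ} (hm : Measurable h) {k : ℝ} (hk : ∀ x, |h x| ≤ k)
    (hi : Integrable h) (R : ℝ) :
    Tendsto (fun ε => ∫⁻ x in Metric.ball 0 R, Dosc ε h x) (𝓝[>] 0) (𝓝 0) := by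
  have h0 : (0 : ℝ≥0∞) = ∫⁻ _ in Metric.ball (0 : E n) R, 0 := by simp
  rw [h0]
  refine tendsto_lintegral_filter_of_dominated_convergence
    (fun _ => ENNReal.ofReal (2 * k) * (2 * volume (Metric.closedBall (0 : E n) 1)))
    (Eventually.of_forall fun ε => Dosc_meas hm ε) ?_ ?_ (ae_restrict_of_ae (tendsto_Dosc hm hi))
  · filter_upwards [self_mem_nhdsWithin] with ε hε
    exact ae_of_all _ fun x => Dosc_le_of_bdd hk hε x
  · rw [setLIntegral_const]
    exact ENNReal.mul_ne_top (ENNReal.mul_ne_top ofReal_ne_top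
      (ENNReal.mul_ne_top (by simp) measure_closedBall_lt_top.ne)) measure_ball_lt_top.ne
end

/-! ### Convergence of the truncations in `L¹` for `L log L` functions -/

section
variable {n : ℕ}

/-- Truncation of `f` at height `k`. -/
def trunc (k : ℕ) (f : E n → ℝ) (x : E n) : ℝ := if |f x| ≤ k then f x else 0

lemma trunc_meas (k : ℕ) {f : E n → ℝ} (hf : Measurable f) : Measurable (trunc k f) :=
  Measurable.ite (measurableSet_le (measurable_abs.comp hf) measurable_const) hf measurable_const

lemma trunc_bd (k : ℕ) (f : E n → ℝ) (x : E n) : |trunc k f x| ≤ k := by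
  unfold trunc; split_ifs with h
  · exact h
  · simp

lemma trunc_supp (k : ℕ) {f : E n → ℝ} {x : E n} (h : f x = 0) : trunc k f x = 0 := by
  simp [trunc, h]

/-- A measurable function supported in `‖x‖ < R` with finite `L log L` modular. -/
structure LL (R : ℝ) (f : E n → ℝ) : Prop where
  pos : 0 < R
  meas : Measurable f
  supp : ∀ x, R ≤ ‖x‖ → f x = 0
  fin : ∫⁻ x, ENNReal.ofReal (|f x| * Real.log (max |f x| 1)) < ⊤

section
variable {R : ℝ} {f : E n → ℝ} (hf : LL R f)
include hf

lemma LL.integrable : Integrable f := by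
  refine ⟨hf.meas.aestronglyMeasurable, ?_⟩
  have : ∫⁻ x, ‖f x‖ₑ ≤ ∫⁻ x, (ENNReal.ofReal (|f x| * Real.log (max |f x| 1)) +
      (Metric.ball (0 : E n) R).indicator (fun _ => ENNReal.ofReal (Real.exp 1)) x) := by
    refine lintegral_mono fun x => ?_
    rw [← ofReal_norm, Real.norm_eq_abs]
    by_cases hx : x ∈ Metric.ball (0 : E n) R
    · rw [indicator_of_mem hx, ← ENNReal.ofReal_add
        (mul_nonneg (abs_nonneg _) (Real.log_nonneg (le_max_right _ _))) (Real.exp_pos _).le]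
      apply ENNReal.ofReal_le_ofReal
      have := young_exp (abs_nonneg (f x)) zero_le_one
      linarith
    · rw [hf.supp x (by simpa using hx)]; simp
  refine this.trans_lt ?_
  rw [lintegral_add_right _ (measurable_const.indicator measurableSet_ball),
    lintegral_indicator measurableSet_ball, setLIntegral_const]
  exact ENNReal.add_lt_top.2 ⟨hf.fin, ENNReal.mul_lt_top ofReal_lt_top measure_ball_lt_top⟩

lemma LL.trunc_integrable (k : ℕ) : Integrable (trunc k f) :=
  integrable_of_bdd_supp (C := k) (trunc_meas k hf.meas).aestronglyMeasurable
    (fun x => trunc_bd k f x) (measurableSet_ball (x := (0 : E n)) (ε := R)) measure_ball_lt_top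
    fun x hx => trunc_supp k (hf.supp x (by simpa using hx))

/-- The modular of the part of `f` above height `k` tends to zero, by dominated convergence. -/
lemma LL.tendsto_tail (R' : ℝ) {d : ℝ} (hd : 0 < d) :
    Tendsto (fun k : ℕ => ∫⁻ x in Metric.ball 0 R', ENNReal.ofReal (|f x - trunc k f x| *
      Real.log (max (|f x - trunc k f x| / d) 1))) atTop (𝓝 0) := by
  have hfm := hf.meas
  have h0 : (0 : ℝ≥0∞) = ∫⁻ _ in Metric.ball (0 : E n) R', 0 := by simp
  rw [h0]
  refine tendsto_lintegral_of_dominated_convergence (fun x =>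
    ENNReal.ofReal (|f x| * Real.log (max |f x| 1)) +
      ENNReal.ofReal (Real.log (max (1 / d) 1)) * ENNReal.ofReal |f x|) ?_ ?_ ?_ ?_
  · intro k
    have := trunc_meas k hfm
    fun_prop
  · intro k
    refine ae_of_all _ fun x => ?_
    have hl1 : 0 ≤ Real.log (max (1 / d) 1) := Real.log_nonneg (le_max_right _ _)
    have hl2 : 0 ≤ Real.log (max |f x| 1) := Real.log_nonneg (le_max_right _ _)
    beta_reduce
    rw [← ENNReal.ofReal_mul hl1, ← ENNReal.ofReal_add (by positivity) (by positivity)]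
    apply ENNReal.ofReal_le_ofReal
    unfold trunc
    split_ifs
    · rw [sub_self, abs_zero, zero_mul]
      exact add_nonneg (mul_nonneg (abs_nonneg _) hl2) (mul_nonneg hl1 (abs_nonneg _))
    · rw [sub_zero]
      have h1 : max (|f x| / d) 1 ≤ max |f x| 1 * max (1 / d) 1 := by
        refine max_le ?_ (one_le_mul_of_one_le_of_one_le (le_max_right _ _) (le_max_right _ _))
        rw [div_eq_mul_one_div]
        exact mul_le_mul (le_max_left _ _) (le_max_left _ _) (by positivity) (by positivity)
      have h2 : Real.log (max (|f x| / d) 1) ≤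
          Real.log (max |f x| 1) + Real.log (max (1 / d) 1) := by
        rw [← Real.log_mul (by positivity) (by positivity)]
        exact Real.log_le_log (by positivity) h1
      calc _ ≤ |f x| * (Real.log (max |f x| 1) + Real.log (max (1 / d) 1)) := by gcongr
        _ = _ := by ring
  · rw [lintegral_add_right _ (by fun_prop), lintegral_const_mul _ (by fun_prop)]
    refine (ENNReal.add_lt_top.2 ⟨?_, ENNReal.mul_lt_top ofReal_lt_top ?_⟩).ne
    · exact (setLIntegral_le_lintegral _ _).trans_lt hf.fin
    · exact (setLIntegral_le_lintegral _ _).trans_lt hf.integrable.abs.lintegral_lt_top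
  · refine ae_of_all _ fun x => ?_
    refine tendsto_const_nhds.congr' ?_
    filter_upwards [eventually_ge_atTop ⌈|f x|⌉₊] with k hk
    have : |f x| ≤ k := (Nat.le_ceil _).trans (by exact_mod_cast hk)
    simp [trunc, this]
end

lemma exists_small_mul {c s η : ℝ≥0∞} (hc : c ≠ ⊤) (hs : s ≠ ⊤) (hη : η ≠ 0) :
    ∃ d : ℝ, 0 < d ∧ c * (ENNReal.ofReal d * s) ≤ η := by
  have h1 : Tendsto (fun d : ℝ => c * (ENNReal.ofReal d * s)) (𝓝[>] 0) (𝓝 (c * (0 * s))) := by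
    refine ENNReal.Tendsto.const_mul (ENNReal.Tendsto.mul_const ?_ (Or.inr hs)) (Or.inr hc)
    have := ENNReal.tendsto_ofReal (tendsto_id (x := 𝓝 (0 : ℝ)))
    simp only [id, ENNReal.ofReal_zero] at this
    exact this.mono_left nhdsWithin_le_nhds
  rw [zero_mul, mul_zero] at h1
  have h2 := h1.eventually (gt_mem_nhds (pos_iff_ne_zero.2 hη))
  obtain ⟨d, hd, hd'⟩ := (h2.and self_mem_nhdsWithin).exists
  exact ⟨d, hd', hd.le⟩

/-- The modular of the unbounded part of `f` can be made arbitrarily small. -/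
lemma LL.exists_trunc {R : ℝ} {f : E n → ℝ} (hf : LL R f) {R' : ℝ} (hR' : 0 < R') {c η : ℝ≥0∞}
    (hc : c ≠ ⊤) (hη : η ≠ 0) :
    ∃ d : ℝ, 0 < d ∧ ∃ k : ℕ, c * keL R' d (fun x => f x - trunc k f x) ≤ η := by
  have hη2 : η / 2 ≠ 0 := (ENNReal.half_pos hη).ne'
  obtain ⟨d, hd, h1⟩ := exists_small_mul hc (slC_lt_top n hR').ne hη2
  have h2 := ENNReal.Tendsto.const_mul (hf.tendsto_tail R' hd) (Or.inr hc)
  rw [mul_zero] at h2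
  obtain ⟨k, hk⟩ := (h2.eventually (gt_mem_nhds (pos_iff_ne_zero.2 hη2))).exists
  refine ⟨d, hd, k, ?_⟩
  rw [keL, mul_add, ← ENNReal.add_halves η]
  exact add_le_add hk.le h1

section
variable {K : E n → ℝ} {C : ℝ} (hK : GoodK K C) {R : ℝ} {f : E n → ℝ} (hf : LL R f)
include hK hf

/-- The truncated singular integrals of an `L log L` function are Cauchy in `L¹` of a ball. -/
lemma Tk_cauchy {η : ℝ≥0∞} (hη : η ≠ 0) :
    ∃ ε₀ : ℝ, 0 < ε₀ ∧ ∀ ε δ : ℝ, 0 < δ → δ ≤ ε → ε ≤ ε₀ →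
      ∫⁻ x in Metric.ball 0 (R + 1), ENNReal.ofReal |Tk K ε f x - Tk K δ f x| ≤ η := by
  have hR1 : 0 < R + 1 := by linarith [hf.pos]
  have hη2 : η / 2 ≠ 0 := (ENNReal.half_pos hη).ne'
  have hη4 : η / 2 / 2 ≠ 0 := ne_of_gt (ENNReal.half_pos hη2)
  have hA := (keA_lt_top n C).ne
  -- Split `f` into a bounded part and a part of small modular.
  obtain ⟨d, hd, k, hk⟩ := hf.exists_trunc hR1 hA hη4
  obtain ⟨d', hd', h1⟩ := exists_small_mul hA (slC_lt_top n hR1).ne hη4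
  have hhm := trunc_meas k hf.meas
  have hhi := hf.trunc_integrable k
  have hhs : ∀ x, R ≤ ‖x‖ → trunc k f x = 0 := fun x hx => trunc_supp k (hf.supp x hx)
  have hD := tendsto_lintegral_Dosc hhm (trunc_bd k f) hhi (R + 1)
  have h2 : Tendsto (fun ε => ENNReal.ofReal (cEta n C) *
      (∫⁻ x in Metric.ball 0 (R + 1), Dosc ε (trunc k f) x) +
      keA n C * (ENNReal.ofReal (mc n * Real.log (max (2 * k / d') 1)) *
        (∫⁻ x in Metric.ball 0 (R + 1), Dosc ε (trunc k f) x))) (𝓝[>] 0) (𝓝 0) := by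
    have h3 := ENNReal.Tendsto.const_mul hD (a := ENNReal.ofReal (cEta n C)) (Or.inr ofReal_ne_top)
    have h4 := ENNReal.Tendsto.const_mul (ENNReal.Tendsto.const_mul hD
      (a := ENNReal.ofReal (mc n * Real.log (max (2 * k / d') 1))) (Or.inr ofReal_ne_top))
      (a := keA n C) (Or.inr hA)
    simpa using h3.add h4
  have h5 := h2.eventually (gt_mem_nhds (pos_iff_ne_zero.2 hη4))
  rw [eventually_nhdsWithin_iff, Metric.eventually_nhds_iff] at h5
  obtain ⟨ε₁, hε₁, h5⟩ := h5
  refine ⟨min (ε₁ / 2) 1, by positivity, fun ε δ hδ hδε hε => ?_⟩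
  have hε0 : 0 < ε := hδ.trans_le hδε
  have hb := Tk_cauchy_bdd hK hhm (trunc_bd k f) hf.pos hhs hδ hδε
    (hε.trans (min_le_right _ _)) hd'
  have h6 := h5 (y := ε) (by
    rw [dist_zero_right, Real.norm_eq_abs, abs_of_pos hε0]
    have := hε.trans (min_le_left _ _); linarith) hε0
  set u : E n → ℝ := fun x => f x - trunc k f x with hu
  have hum : Measurable u := hf.meas.sub hhm
  have hui : Integrable u := hf.integrable.sub hhi
  have hus : ∀ x, R + 1 ≤ ‖x‖ → u x = 0 := fun x hx => by
    simp only [hu]; rw [hf.supp x (by linarith), hhs x (by linarith), sub_zero]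
  have hT : ∀ ε, 0 < ε → ∫⁻ x in Metric.ball 0 (R + 1), ENNReal.ofReal |Tk K ε u x| ≤ η / 2 / 2 :=
    fun ε hε => (ke_op hK hR1 hε hum hui hus hd).trans hk
  have m1 : ∀ ε, Measurable fun x => ENNReal.ofReal |Tk K ε u x| := fun ε => by
    have := Tk_measurable hK ε hum
    fun_prop
  calc ∫⁻ x in Metric.ball 0 (R + 1), ENNReal.ofReal |Tk K ε f x - Tk K δ f x|
      ≤ ∫⁻ x in Metric.ball 0 (R + 1), (ENNReal.ofReal |Tk K ε u x| +
          (ENNReal.ofReal |Tk K δ u x| +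
          ENNReal.ofReal |Tk K ε (trunc k f) x - Tk K δ (trunc k f) x|)) := by
        refine lintegral_mono fun x => ?_
        have e : Tk K ε f x - Tk K δ f x = Tk K ε u x + (-Tk K δ u x +
            (Tk K ε (trunc k f) x - Tk K δ (trunc k f) x)) := by
          simp only [hu]; rw [Tk_sub hK hδ hf.integrable hhi, Tk_sub hK hε0 hf.integrable hhi]; ring
        rw [e, ← ENNReal.ofReal_add (abs_nonneg _) (abs_nonneg _),
          ← ENNReal.ofReal_add (abs_nonneg _) (by positivity)]
        apply ENNReal.ofReal_le_ofReal
        refine (abs_add_le _ _).trans ?_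
        gcongr
        refine (abs_add_le _ _).trans ?_
        rw [abs_neg]
    _ ≤ η / 2 / 2 + (η / 2 / 2 + (η / 2 / 2 + η / 2 / 2)) := by
        rw [lintegral_add_left (m1 _), lintegral_add_left (m1 _)]
        refine add_le_add (hT ε hε0) (add_le_add (hT δ hδ) (hb.trans ?_))
        rw [mul_add, ← add_assoc]
        exact add_le_add h6.le h1
    _ = η := by
        rw [ENNReal.add_halves, ← add_assoc, ENNReal.add_halves, ENNReal.add_halves]

/-- The `L¹` limit of the truncated singular integrals. -/
lemma Tk_limit : ∃ g : E n → ℝ, Measurable g ∧ IntegrableOn g (Metric.ball 0 (R + 1)) ∧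
    Tendsto (fun ε => ∫⁻ x in Metric.ball 0 (R + 1), ENNReal.ofReal |Tk K ε f x - g x|)
      (𝓝[>] 0) (𝓝 0) := by
  have hR1 : 0 < R + 1 := by linarith [hf.pos]
  set μ := (volume : Measure (E n)).restrict (Metric.ball 0 (R + 1)) with hμ
  have : IsFiniteMeasure μ := isFiniteMeasure_restrict.2 measure_ball_lt_top.ne
  have hB0 : ∀ N : ℕ, ((2 : ℝ≥0∞)⁻¹ ^ N) ≠ 0 := fun N => by
    simp [pow_eq_zero_iff']
  have hBt : ∀ N : ℕ, ((2 : ℝ≥0∞)⁻¹ ^ N) ≠ ⊤ := fun N => ENNReal.pow_ne_top (by simp)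
  choose e he0 he using fun N : ℕ => Tk_cauchy hK hf (ne_of_gt (ENNReal.half_pos (hB0 N)))
  -- Truncation parameters along which the convergence is geometrically fast, so that completeness
  -- of `L¹` applies.
  set s : ℕ → ℝ := fun N => min ((Finset.range (N + 1)).inf' ⟨0, by simp⟩ e) (1 / (N + 1)) with hs
  have hs0 : ∀ N, 0 < s N := fun N => by
    exact lt_min ((Finset.lt_inf'_iff _).2 fun i _ => he0 i) (by positivity)
  have hse : ∀ N m, N ≤ m → s m ≤ e N := fun N m h =>
    (min_le_left _ _).trans (Finset.inf'_le _ (by simp; omega))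
  have hslim : Tendsto s atTop (𝓝 0) := by
    refine squeeze_zero (fun N => (hs0 N).le) (fun N => min_le_right _ _)
      tendsto_one_div_add_atTop_nhds_zero_nat
  have hTm : ∀ ε, Measurable (Tk K ε f) := fun ε => Tk_measurable hK ε hf.meas
  have hmem : ∀ N, MemLp (Tk K (s N) f) 1 μ := fun N => by
    refine MemLp.of_bound (hTm _).aestronglyMeasurable (C / s N ^ n * ∫ z, |f z|)
      (ae_of_all _ fun x => ?_)
    exact Tk_bd hK (hs0 N) hf.integrable x
  have hsymm : ∀ a b : ℕ, ∫⁻ x, ENNReal.ofReal |Tk K (s a) f x - Tk K (s b) f x| ∂μ =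
      ∫⁻ x, ENNReal.ofReal |Tk K (s b) f x - Tk K (s a) f x| ∂μ := fun a b => by
    congr 1; ext x; rw [abs_sub_comm]
  have hcau : ∀ N a b : ℕ, N ≤ a → N ≤ b →
      eLpNorm (Tk K (s a) f - Tk K (s b) f) 1 μ < (2 : ℝ≥0∞)⁻¹ ^ N := by
    intro N a b ha hb
    rw [eLpNorm_one_eq_lintegral_enorm]
    simp_rw [← ofReal_norm, Real.norm_eq_abs, Pi.sub_apply]
    refine lt_of_le_of_lt ?_ (ENNReal.half_lt_self (hB0 N) (hBt N))
    rcases le_total (s b) (s a) with h | h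
    · exact he N _ _ (hs0 b) h (hse N a ha)
    · rw [hsymm]
      exact he N _ _ (hs0 a) h (hse N b hb)
  have hsum : ∑' N : ℕ, (2 : ℝ≥0∞)⁻¹ ^ N ≠ ⊤ := by
    rw [ENNReal.tsum_geometric, ENNReal.one_sub_inv_two, inv_inv]; simp
  obtain ⟨g₀, hg₀, hlim⟩ := Lp.cauchy_complete_eLpNorm le_rfl hmem hsum hcau
  set g := hg₀.1.mk g₀ with hg
  have hgm : Measurable g := hg₀.1.stronglyMeasurable_mk.measurable
  have hge : g₀ =ᵐ[μ] g := hg₀.1.ae_eq_mk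
  refine ⟨g, hgm, (memLp_one_iff_integrable.1 hg₀).congr hge, ?_⟩
  have hlim' : Tendsto (fun N => ∫⁻ x, ENNReal.ofReal |Tk K (s N) f x - g x| ∂μ)
      atTop (𝓝 0) := by
    refine hlim.congr fun N => ?_
    rw [eLpNorm_one_eq_lintegral_enorm]
    refine lintegral_congr_ae ?_
    filter_upwards [hge] with x hx
    rw [← ofReal_norm, Real.norm_eq_abs, Pi.sub_apply, hx]
  rw [ENNReal.tendsto_nhds_zero]
  intro η hη
  have hη2 : η / 2 ≠ 0 := (ENNReal.half_pos hη.ne').ne'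
  obtain ⟨ε₀, hε₀, h1⟩ := Tk_cauchy hK hf hη2
  filter_upwards [Ioc_mem_nhdsGT hε₀] with ε hε
  obtain ⟨N, hN1, hN2⟩ := ((hslim.eventually (gt_mem_nhds hε.1)).and
    (hlim'.eventually (gt_mem_nhds (pos_iff_ne_zero.2 hη2)))).exists
  have m1 : Measurable fun x => ENNReal.ofReal |Tk K ε f x - Tk K (s N) f x| := by
    have h1 := hTm ε
    have h2 := hTm (s N)
    fun_prop
  calc ∫⁻ x, ENNReal.ofReal |Tk K ε f x - g x| ∂μ
      ≤ ∫⁻ x, (ENNReal.ofReal |Tk K ε f x - Tk K (s N) f x| +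
          ENNReal.ofReal |Tk K (s N) f x - g x|) ∂μ := by
        refine lintegral_mono fun x => ?_
        rw [← ENNReal.ofReal_add (abs_nonneg _) (abs_nonneg _)]
        exact ENNReal.ofReal_le_ofReal (abs_sub_le _ _ _)
    _ ≤ η / 2 + η / 2 := by
        rw [lintegral_add_left m1]
        exact add_le_add (h1 _ _ (hs0 N) hN1.le hε.2) hN2.le
    _ = η := ENNReal.add_halves η
end
end

/-! ### Almost everywhere convergence -/

section
variable {n : ℕ}

section
variable {K : E n → ℝ} {C : ℝ} (hK : GoodK K C) {R : ℝ} {f : E n → ℝ} (hf : LL R f)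
include hK hf

/-- `T_ε f` differs from the mollification at scale `ε` of the `L¹` limit `g` by at most the mean
oscillation of `f`: mollify `T_δ f` and let `δ → 0`. -/
lemma Tk_sub_moll_le {g : E n → ℝ} (hgi : IntegrableOn g (Metric.ball 0 (R + 1)))
    (hlim : Tendsto (fun ε => ∫⁻ x in Metric.ball 0 (R + 1), ENNReal.ofReal |Tk K ε f x - g x|)
      (𝓝[>] 0) (𝓝 0)) {ε : ℝ} (hε : 0 < ε) {x : E n} (hx : ‖x‖ + ε ≤ R + 1) :
    ENNReal.ofReal |Tk K ε f x - moll ε ((Metric.ball 0 (R + 1)).indicator g) x| ≤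
      ENNReal.ofReal (cEta n C) * Dosc ε f x := by
  set B := Metric.ball (0 : E n) (R + 1) with hB
  set G := B.indicator g with hG
  have hGi : Integrable G := (integrable_indicator_iff measurableSet_ball).2 hgi
  set c := ENNReal.ofReal (mc n / ε ^ n) with hc
  have h0 : Tendsto (fun δ => ENNReal.ofReal (cEta n C) * Dosc ε f x +
      c * ∫⁻ y in B, ENNReal.ofReal |Tk K δ f y - g y|) (𝓝[>] 0)
      (𝓝 (ENNReal.ofReal (cEta n C) * Dosc ε f x)) := by
    have := (tendsto_const_nhds (x := ENNReal.ofReal (cEta n C) * Dosc ε f x)).add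
      (ENNReal.Tendsto.const_mul hlim (a := c) (Or.inr ofReal_ne_top))
    simpa using this
  -- Bound the left side for each `δ ≤ ε`, with an error which vanishes as `δ → 0`.
  refine ge_of_tendsto h0 ?_
  filter_upwards [Ioc_mem_nhdsGT hε] with δ hδ
  have hTi : Integrable (fun z => psi ε z * Tk K δ f (x - z)) := by
    refine (psi_integrable hε).mul_bdd (c := C / δ ^ n * ∫ z, |f z|) ?_
      (ae_of_all _ fun z => Tk_bd hK hδ.1 hf.integrable _)
    have := Tk_measurable hK δ hf.meas
    exact Measurable.aestronglyMeasurable (by fun_prop)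
  have e1 : Tk K ε f x - moll ε G x = (Tk K ε f x - ∫ y, Tk K δ (psi ε) y * f (x - y)) +
      ∫ z, (psi ε z * Tk K δ f (x - z) - psi ε z * G (x - z)) := by
    rw [integral_sub hTi (psi_mul_integrable hε hGi x), integral_psi_mul_Tk hK hε hδ.1 hf.integrable,
      moll]
    ring
  rw [e1]
  refine (ENNReal.ofReal_le_ofReal (abs_add_le _ _)).trans ?_
  rw [ENNReal.ofReal_add (abs_nonneg _) (abs_nonneg _)]
  refine add_le_add (Tk_sub_le hK hδ.1 hδ.2 hf.integrable x) ?_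
  rw [← Real.norm_eq_abs, ofReal_norm]
  refine (enorm_integral_le_lintegral_enorm _).trans ?_
  rw [← lintegral_indicator measurableSet_ball, ← lintegral_const_mul' _ _ ofReal_ne_top,
    ← lintegral_sub_left_eq_self (fun y => c * B.indicator _ y) x]
  refine lintegral_mono fun z => ?_
  rw [← mul_sub, ← ofReal_norm, norm_mul, Real.norm_eq_abs, Real.norm_eq_abs,
    abs_of_nonneg (psi_nonneg hε z)]
  rcases le_or_gt ε ‖z‖ with hz | hz
  · rw [psi_supp hε hz]; simp
  · have hm : x - z ∈ B := by
      rw [hB, mem_ball_zero_iff]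
      have := norm_sub_le x z
      linarith
    rw [indicator_of_mem hm, hG, indicator_of_mem hm, hc,
      ENNReal.ofReal_mul (psi_nonneg hε z)]
    gcongr
    exact psi_le hε z

/-- The truncated singular integrals converge almost everywhere to their `L¹` limit. -/
lemma Tk_tendsto_ae {g : E n → ℝ} (hgm : Measurable g)
    (hgi : IntegrableOn g (Metric.ball 0 (R + 1)))
    (hlim : Tendsto (fun ε => ∫⁻ x in Metric.ball 0 (R + 1), ENNReal.ofReal |Tk K ε f x - g x|)
      (𝓝[>] 0) (𝓝 0)) :
    ∀ᵐ x, ‖x‖ < R + 1 → Tendsto (fun ε => Tk K ε f x) (𝓝[>] 0) (𝓝 (g x)) := by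
  set B := Metric.ball (0 : E n) (R + 1) with hB
  have hGi : Integrable (B.indicator g) := (integrable_indicator_iff measurableSet_ball).2 hgi
  filter_upwards [tendsto_Dosc hf.meas hf.integrable,
    tendsto_Dosc (hgm.indicator measurableSet_ball) hGi] with x h1 h2 hx
  have hgx : B.indicator g x = g x := indicator_of_mem (by simpa [hB] using hx) _
  have h3 : Tendsto (fun ε => ENNReal.ofReal (cEta n C) * Dosc ε f x +
      ENNReal.ofReal (mc n) * Dosc ε (B.indicator g) x) (𝓝[>] 0) (𝓝 0) := by
    have := (ENNReal.Tendsto.const_mul h1 (a := ENNReal.ofReal (cEta n C))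
      (Or.inr ofReal_ne_top)).add (ENNReal.Tendsto.const_mul h2 (a := ENNReal.ofReal (mc n))
      (Or.inr ofReal_ne_top))
    simpa using this
  have h4 : Tendsto (fun ε => ENNReal.ofReal |Tk K ε f x - g x|) (𝓝[>] 0) (𝓝 0) := by
    refine tendsto_of_tendsto_of_tendsto_of_le_of_le' tendsto_const_nhds h3
      (Eventually.of_forall fun _ => zero_le) ?_
    filter_upwards [Ioc_mem_nhdsGT (sub_pos.2 hx)] with ε hε
    refine (ENNReal.ofReal_le_ofReal (abs_sub_le _ (moll ε (B.indicator g) x) _)).trans ?_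
    rw [ENNReal.ofReal_add (abs_nonneg _) (abs_nonneg _)]
    refine add_le_add (Tk_sub_moll_le hK hf hgi hlim hε.1 (by linarith [hε.2])) ?_
    have := moll_sub_le hε.1 hGi x
    rwa [hgx] at this
  rw [tendsto_iff_norm_sub_tendsto_zero]
  have h5 := (ENNReal.tendsto_toReal (zero_ne_top)).comp h4
  refine h5.congr fun ε => ?_
  simp
end
end

/-! ### The kernels `Ω(x) / ‖x‖ ^ n` -/

section
variable {n : ℕ}

section
variable {Ω : E n → ℝ} (hK : IsCZKernel Ω)
include hK

lemma kernelFn_smul_pos {s : ℝ} (hs : 0 < s) (y : E n) :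
    s ^ n * kernelFn Ω (s • y) = kernelFn Ω y := by
  unfold kernelFn
  rw [hK.hom _ _ hs, norm_smul, Real.norm_eq_abs, abs_of_pos hs, mul_pow, ← mul_div_assoc,
    mul_div_mul_left _ _ (by positivity)]

lemma kernelFn_contDiffOn : ContDiffOn ℝ 1 (kernelFn Ω) {x : E n | x ≠ 0} := by
  unfold kernelFn
  refine (hK.smooth.of_le (by exact_mod_cast le_top)).div ?_ fun x hx => ?_
  · exact (contDiffOn_id.norm ℝ fun x hx => hx).pow n
  · have : 0 < ‖x‖ := norm_pos_iff.2 hx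
    positivity

/-- An odd Calderón–Zygmund kernel has the size, homogeneity and regularity properties `GoodK`; both
bounds come from compactness after rescaling to the unit sphere. -/
lemma kernelFn_goodK (hn : 0 < n) (hodd : ∀ x, Ω (-x) = -Ω x) :
    ∃ C, GoodK (kernelFn Ω) C := by
  have ho : IsOpen {x : E n | x ≠ 0} := isOpen_ne
  have hcd := kernelFn_contDiffOn hK
  have hkodd : ∀ y, kernelFn Ω (-y) = -kernelFn Ω y := fun y => by
    unfold kernelFn; rw [hodd, norm_neg, neg_div]
  have hA : IsCompact (Metric.closedBall (0 : E n) (3 / 2) ∩ {x | 1 / 2 ≤ ‖x‖}) :=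
    (isCompact_closedBall _ _).inter_right (isClosed_le continuous_const continuous_norm)
  -- The compact annulus `A` contains the ball of radius `1/2` about every unit vector.
  set A := Metric.closedBall (0 : E n) (3 / 2) ∩ {x | 1 / 2 ≤ ‖x‖} with hAd
  have hA0 : A ⊆ {x | x ≠ 0} := fun x hx h0 => by
    have := hx.2
    simp only [mem_ofPred_eq, h0, norm_zero] at this
    norm_num at this
  obtain ⟨M1, hM1⟩ := hA.exists_bound_of_continuousOn (hcd.continuousOn.mono hA0)
  obtain ⟨M2, hM2⟩ := hA.exists_bound_of_continuousOn
    ((hcd.continuousOn_fderiv_of_isOpen ho le_rfl).mono hA0)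
  set C := max (max M1 M2) 1 with hC
  have hC1 : M1 ≤ C := (le_max_left _ _).trans (le_max_left _ _)
  have hC2 : M2 ≤ C := (le_max_right _ _).trans (le_max_left _ _)
  have hC0 : 0 < C := zero_lt_one.trans_le (le_max_right _ _)
  have hunit : ∀ y : E n, y ≠ 0 → ‖(‖y‖⁻¹ • y)‖ = 1 := fun y hy => by
    rw [norm_smul, norm_inv, norm_norm, inv_mul_cancel₀ (norm_ne_zero_iff.2 hy)]
  refine ⟨C, hn, hC0, ?_, ?_, ?_, hkodd, ?_⟩
  · classical
    have h0 : kernelFn Ω = {x : E n | x ≠ 0}.piecewise (kernelFn Ω) 0 := by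
      ext x
      by_cases hx : x = 0
      · subst hx
        simp [kernelFn, hn.ne']
      · rw [piecewise_eq_of_mem _ _ _ (by exact hx)]
    rw [h0]
    exact hcd.continuousOn.measurable_piecewise continuousOn_const ho.measurableSet
  · intro y
    by_cases hy : y = 0
    · subst hy; simp [hn.ne', hC0.le]
    have hr : 0 < ‖y‖ := norm_pos_iff.2 hy
    have h1 := kernelFn_smul_pos hK (inv_pos.2 hr) y
    have h2 := hM1 (‖y‖⁻¹ • y) ⟨by simp [hunit y hy]; norm_num, by simp [hunit y hy]; norm_num⟩
    rw [← h1, abs_mul, abs_of_pos (by positivity), inv_pow, mul_right_comm,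
      inv_mul_cancel₀ (by positivity), one_mul]
    exact h2.trans hC1
  · intro s y hs
    rcases hs.lt_or_gt with h | h
    · have h1 := kernelFn_smul_pos hK (neg_pos.2 h) y
      rw [neg_smul, hkodd] at h1
      rw [abs_of_neg h, ← h1]; ring
    · rw [abs_of_pos h, ← kernelFn_smul_pos hK h y]; ring
  · intro y v hy hv
    have hr : 0 < ‖y‖ := norm_pos_iff.2 hy
    set e := ‖y‖⁻¹ • y with he
    have he1 : ‖e‖ = 1 := hunit y hy
    set w := ‖y‖⁻¹ • v with hw
    have hw1 : ‖w‖ ≤ 1 / 2 := by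
      rw [hw, norm_smul, norm_inv, norm_norm, inv_mul_le_iff₀ hr]; linarith
    have hsub : Metric.closedBall e (1 / 2) ⊆ A := fun z hz => by
      rw [mem_closedBall_iff_norm] at hz
      refine ⟨?_, ?_⟩
      · rw [mem_closedBall_zero_iff]
        have := norm_le_norm_add_norm_sub' z e
        linarith
      · rw [mem_ofPred_eq]
        have := norm_le_norm_add_norm_sub z e
        linarith
    have h1 : ‖kernelFn Ω (e - w) - kernelFn Ω e‖ ≤ M2 * ‖(e - w) - e‖ := by
      refine (convex_closedBall e (1 / 2)).norm_image_sub_le_of_norm_fderiv_le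
        (fun z hz => ?_) (fun z hz => hM2 z (hsub hz)) (by simp) (by simpa using hw1)
      exact (hcd.contDiffAt (ho.mem_nhds (hA0 (hsub hz)))).differentiableAt (by simp)
    have h2 := kernelFn_smul_pos hK (inv_pos.2 hr) y
    have h3 := kernelFn_smul_pos hK (inv_pos.2 hr) (y - v)
    rw [smul_sub, ← he, ← hw] at h3
    rw [← he] at h2
    rw [← h2, ← h3, ← mul_sub, abs_mul, abs_of_pos (by positivity), inv_pow]
    rw [Real.norm_eq_abs, sub_sub_cancel_left, norm_neg] at h1
    have hwv : ‖y‖ * ‖w‖ = ‖v‖ := by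
      rw [hw, norm_smul, norm_inv, norm_norm, mul_inv_cancel_left₀ hr.ne']
    calc _ = ‖y‖ * |kernelFn Ω (e - w) - kernelFn Ω e| := by
          clear_value e w
          field_simp
          ring
      _ ≤ ‖y‖ * (M2 * ‖w‖) := by gcongr
      _ ≤ ‖y‖ * (C * ‖w‖) := by gcongr
      _ = _ := by rw [← hwv]; ring
end
end

/-! ### Passage to the limit -/

section
variable {n : ℕ}

section
variable {K : E n → ℝ} {C : ℝ} (hK : GoodK K C) {R : ℝ}
include hK

/-- The uniform bound `ke_pairing` passes to the pointwise limit of `T_ε φ` by Fatou's lemma. -/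
lemma lim_pairing_le {φ γ : E n → ℝ} (hφ : LL R φ) (hb : ∀ x, |φ x| ≤ 1)
    (hae : ∀ᵐ x, ‖x‖ < R + 1 → Tendsto (fun ε => Tk K ε φ x) (𝓝[>] 0) (𝓝 (γ x)))
    {u : E n → ℝ} (hu : Measurable u) {d : ℝ} (hd : 0 < d) :
    ∫⁻ x in Metric.ball 0 (R + 1), ENNReal.ofReal (|u x| * |γ x|) ≤
      keA n C * keL (R + 1) d u := by
  have hR1 : 0 < R + 1 := by linarith [hφ.pos]
  set e : ℕ → ℝ := fun j => 1 / ((j : ℝ) + 1) with he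
  have he0 : ∀ j, 0 < e j := fun j => by simp only [he]; positivity
  have hlim : Tendsto e atTop (𝓝[>] 0) :=
    tendsto_nhdsWithin_iff.2 ⟨tendsto_one_div_add_atTop_nhds_zero_nat, Eventually.of_forall he0⟩
  have hm : ∀ j, Measurable fun x => ENNReal.ofReal (|u x| * |Tk K (e j) φ x|) := fun j => by
    have := Tk_measurable hK (e j) hφ.meas
    fun_prop
  calc ∫⁻ x in Metric.ball 0 (R + 1), ENNReal.ofReal (|u x| * |γ x|)
      ≤ ∫⁻ x in Metric.ball 0 (R + 1),
          liminf (fun j => ENNReal.ofReal (|u x| * |Tk K (e j) φ x|)) atTop := by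
        refine lintegral_mono_ae ?_
        filter_upwards [ae_restrict_of_ae hae, ae_restrict_mem measurableSet_ball] with x hx hxB
        have h1 := (hx (by simpa using hxB)).comp hlim
        have h2 := ENNReal.tendsto_ofReal ((h1.abs).const_mul |u x|)
        exact h2.liminf_eq.ge
    _ ≤ liminf (fun j => ∫⁻ x in Metric.ball 0 (R + 1),
          ENNReal.ofReal (|u x| * |Tk K (e j) φ x|)) atTop := lintegral_liminf_le hm
    _ ≤ liminf (fun _ : ℕ => keA n C * keL (R + 1) d u) atTop := by
        refine liminf_le_liminf (Eventually.of_forall fun j => ?_)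
        exact ke_pairing hK hφ.meas hb hR1 (fun x hx => hφ.supp x (by linarith)) (he0 j) hu hd
    _ = _ := liminf_const _

/-- The commuting relation for the `L¹` limits `g` of `T_ε f` and `γ` of `T_ε φ`, with `|φ| ≤ 1`. -/
lemma pairing_limits {f φ g γ : E n → ℝ} (hf : LL R f) (hφ : LL R φ) (hb : ∀ x, |φ x| ≤ 1)
    (hgi : IntegrableOn g (Metric.ball 0 (R + 1)))
    (hg : Tendsto (fun ε => ∫⁻ x in Metric.ball 0 (R + 1), ENNReal.ofReal |Tk K ε f x - g x|)
      (𝓝[>] 0) (𝓝 0))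
    (hγm : Measurable γ) (hγi : IntegrableOn γ (Metric.ball 0 (R + 1)))
    (hγ : Tendsto (fun ε => ∫⁻ x in Metric.ball 0 (R + 1), ENNReal.ofReal |Tk K ε φ x - γ x|)
      (𝓝[>] 0) (𝓝 0)) :
    Integrable (fun x => g x * φ x) ∧ Integrable (fun x => f x * γ x) ∧
      ∫ x, g x * φ x = - ∫ x, f x * γ x := by
  have hR1 : 0 < R + 1 := by linarith [hφ.pos]
  have hae := Tk_tendsto_ae hK hφ hγm hγi hγ
  have hfm := hf.meas
  have hφm := hφ.meas
  set B := Metric.ball (0 : E n) (R + 1) with hB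
  have hnB : ∀ x ∉ B, R ≤ ‖x‖ := fun x hx => by
    rw [hB, mem_ball_zero_iff, not_lt] at hx; linarith
  have hA := (keA_lt_top n C).ne
  have i1 : Integrable (fun x => g x * φ x) := by
    have h1 : Integrable (fun x => B.indicator g x * φ x) :=
      ((integrable_indicator_iff measurableSet_ball).2 hgi).mul_bdd (c := 1)
        hφm.aestronglyMeasurable (ae_of_all _ hb)
    refine h1.congr (ae_of_all _ fun x => ?_)
    by_cases hx : x ∈ B
    · simp [hx]
    · simp [hφ.supp x (hnB x hx)]
  have i2 : Integrable (fun x => f x * γ x) := by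
    refine ⟨(hfm.mul hγm).aestronglyMeasurable, ?_⟩
    have h1 := lim_pairing_le hK hφ hb hae hfm zero_lt_one
    have h2 : ∫⁻ x, ‖f x * γ x‖ₑ = ∫⁻ x in B, ENNReal.ofReal (|f x| * |γ x|) := by
      rw [← lintegral_indicator measurableSet_ball]
      congr 1; ext x
      by_cases hx : x ∈ B
      · rw [indicator_of_mem hx, ← ofReal_norm, norm_mul, Real.norm_eq_abs, Real.norm_eq_abs]
      · rw [indicator_of_notMem hx, hf.supp x (hnB x hx)]; simp
    rw [HasFiniteIntegral, h2]
    refine h1.trans_lt (ENNReal.mul_lt_top (keA_lt_top n C) ?_)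
    rw [keL]
    refine ENNReal.add_lt_top.2 ⟨?_, ENNReal.mul_lt_top ofReal_lt_top (slC_lt_top n hR1)⟩
    simp only [div_one]
    exact (setLIntegral_le_lintegral _ _).trans_lt hf.fin
  refine ⟨i1, i2, ?_⟩
  have hTfb : ∀ ε, 0 < ε → Integrable (fun x => Tk K ε f x * φ x) := fun ε hε =>
    hφ.integrable.bdd_mul (Tk_measurable hK ε hfm).aestronglyMeasurable
      (ae_of_all _ fun x => Tk_bd hK hε hf.integrable x)
  have hTφb : ∀ ε, 0 < ε → Integrable (fun x => f x * Tk K ε φ x) := fun ε hε =>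
    hf.integrable.mul_bdd (Tk_measurable hK ε hφm).aestronglyMeasurable
      (ae_of_all _ fun x => Tk_bd hK hε hφ.integrable x)
  have t1 : Tendsto (fun ε => ∫ x, Tk K ε f x * φ x) (𝓝[>] 0) (𝓝 (∫ x, g x * φ x)) := by
    refine tendsto_integral_of_L1 _ i1.aestronglyMeasurable ?_ ?_
    · filter_upwards [self_mem_nhdsWithin] with ε hε using hTfb ε hε
    · refine tendsto_of_tendsto_of_tendsto_of_le_of_le tendsto_const_nhds hg
        (fun _ => zero_le) fun ε => ?_
      beta_reduce
      rw [← lintegral_indicator measurableSet_ball]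
      refine lintegral_mono fun x => ?_
      by_cases hx : x ∈ B
      · rw [indicator_of_mem hx, ← sub_mul, ← ofReal_norm, norm_mul, Real.norm_eq_abs,
          Real.norm_eq_abs]
        exact ENNReal.ofReal_le_ofReal (mul_le_of_le_one_right (abs_nonneg _) (hb x))
      · simp [hφ.supp x (hnB x hx)]
  have t2 : Tendsto (fun ε => ∫ x, f x * Tk K ε φ x) (𝓝[>] 0) (𝓝 (∫ x, f x * γ x)) := by
    refine tendsto_integral_of_L1 _ i2.aestronglyMeasurable ?_ ?_
    · filter_upwards [self_mem_nhdsWithin] with ε hε using hTφb ε hε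
    rw [ENNReal.tendsto_nhds_zero]
    intro η hη
    have hη2 : η / 2 ≠ 0 := (ENNReal.half_pos hη.ne').ne'
    have hη4 : η / 2 / 2 ≠ 0 := ne_of_gt (ENNReal.half_pos hη2)
    -- The unbounded part of `f` is handled by the uniform `L log L` bound, and the bounded part by
    -- the `L¹` convergence of `T_ε φ`.
    obtain ⟨d, hd, k, hk⟩ := hf.exists_trunc hR1 hA hη4
    have htm := trunc_meas k hfm
    have hum : Measurable (fun x => f x - trunc k f x) := hfm.sub htm
    have h3 := ENNReal.Tendsto.const_mul hγ (a := ENNReal.ofReal k) (Or.inr ofReal_ne_top)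
    rw [mul_zero] at h3
    filter_upwards [self_mem_nhdsWithin, h3.eventually (gt_mem_nhds (pos_iff_ne_zero.2 hη2))]
      with ε hε hε'
    have hTm := Tk_measurable hK ε hφm
    calc ∫⁻ x, ‖f x * Tk K ε φ x - f x * γ x‖ₑ
        ≤ ∫⁻ x in B, (ENNReal.ofReal (|f x - trunc k f x| * |Tk K ε φ x|) +
            (ENNReal.ofReal (|f x - trunc k f x| * |γ x|) +
            ENNReal.ofReal k * ENNReal.ofReal |Tk K ε φ x - γ x|)) := by
          rw [← lintegral_indicator measurableSet_ball]
          refine lintegral_mono fun x => ?_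
          by_cases hx : x ∈ B
          · rw [indicator_of_mem hx, ← ENNReal.ofReal_mul (by positivity),
              ← ENNReal.ofReal_add (by positivity) (by positivity),
              ← ENNReal.ofReal_add (by positivity) (by positivity), ← ofReal_norm,
              Real.norm_eq_abs]
            apply ENNReal.ofReal_le_ofReal
            have e1 : f x * Tk K ε φ x - f x * γ x = (f x - trunc k f x) * Tk K ε φ x +
                (-((f x - trunc k f x) * γ x) + trunc k f x * (Tk K ε φ x - γ x)) := by ring
            rw [e1, ← abs_mul, ← abs_mul]
            refine (abs_add_le _ _).trans ?_
            gcongr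
            refine (abs_add_le _ _).trans ?_
            rw [abs_neg]
            gcongr
            rw [abs_mul]
            exact mul_le_mul_of_nonneg_right (trunc_bd k f x) (abs_nonneg _)
          · simp [hf.supp x (hnB x hx)]
      _ ≤ η / 2 / 2 + (η / 2 / 2 + η / 2) := by
          rw [lintegral_add_left (by fun_prop), lintegral_add_left (by fun_prop),
            lintegral_const_mul' _ _ ofReal_ne_top]
          refine add_le_add (le_trans ?_ hk) (add_le_add (le_trans ?_ hk) hε'.le)
          · exact ke_pairing hK hφm hb hR1 (fun x hx => hφ.supp x (by linarith)) hε hum hd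
          · exact lim_pairing_le hK hφ hb hae hum hd
      _ = η := by rw [← add_assoc, ENNReal.add_halves, ENNReal.add_halves]
  refine tendsto_nhds_unique t1 (t2.neg.congr' ?_)
  filter_upwards [self_mem_nhdsWithin] with ε hε
  exact (Tk_antisymm hK hε hf.integrable hφ.integrable).symm
end

lemma IsCube.subset_ball {Q : Set (E n)} (hQ : IsCube Q) :
    ∃ R : ℝ, 0 < R ∧ Q ⊆ Metric.ball 0 R := by
  obtain ⟨a, h, hh, rfl⟩ := hQ
  have hc : Bornology.IsBounded {x : E n | ∀ i, a i ≤ x i ∧ x i ≤ a i + h} := by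
    refine (Metric.isBounded_closedBall (x := a) (r := √(∑ _i : Fin n, h ^ 2))).subset fun x hx => ?_
    rw [mem_closedBall_iff_norm, EuclideanSpace.norm_eq]
    refine Real.sqrt_le_sqrt (Finset.sum_le_sum fun i _ => ?_)
    rw [Real.norm_eq_abs, sq_abs, PiLp.sub_apply]
    have := hx i
    exact pow_le_pow_left₀ (by linarith [this.1]) (by linarith [this.2]) 2
  obtain ⟨R, hR, hs⟩ := hc.subset_ball_lt 0 0
  exact ⟨R, hR, hs⟩

lemma LL.of_bdd {R : ℝ} (hR : 0 < R) {φ : E n → ℝ} (hm : Measurable φ) (hb : ∀ x, |φ x| ≤ 1)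
    (hs : ∀ x, R ≤ ‖x‖ → φ x = 0) : LL R φ := by
  refine ⟨hR, hm, hs, ?_⟩
  have : ∀ x, max |φ x| 1 = 1 := fun x => max_eq_right (hb x)
  simp [this]
end

/-- commuting relation: for an odd kernel, if `f` and `φ` are supported
in a cube `Q`, `φ ∈ L^∞(Q)` and `f ∈ L log L(Q)`, then
`∫ Tf·φ = -∫ f·Tφ`, both integrals being absolutely convergent. -/
theorem statement13 {n : ℕ} (hn : 0 < n) (Ω : E n → ℝ) (hK : IsCZKernel Ω)
    (hodd : ∀ x, Ω (-x) = -Ω x) (Q : Set (E n)) (hQ : IsCube Q) (f φ : E n → ℝ)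
    (hfm : Measurable f) (hφm : Measurable φ)
    (hfsupp : ∀ x ∉ Q, f x = 0) (hφsupp : ∀ x ∉ Q, φ x = 0)
    (hφbd : ∃ C : ℝ, ∀ x, |φ x| ≤ C) (hfll : MemLlogL Q f) :
    Integrable (fun x => Tsing Ω f x * φ x) volume ∧
    Integrable (fun x => f x * Tsing Ω φ x) volume ∧
    ∫ x, Tsing Ω f x * φ x = - ∫ x, f x * Tsing Ω φ x := by
  obtain ⟨C, hG⟩ := kernelFn_goodK hK hn hodd
  obtain ⟨R, hR, hQR⟩ := hQ.subset_ball
  have hnQ : ∀ x : E n, R ≤ ‖x‖ → x ∉ Q := fun x hx hxQ => by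
    have := hQR hxQ
    rw [mem_ball_zero_iff] at this
    linarith
  have hf : LL R f := by
    refine ⟨hR, hfm, fun x hx => hfsupp x (hnQ x hx), ?_⟩
    rw [← setLIntegral_eq_of_support_subset (s := Q)]
    · exact hfll.2
    · intro x hx
      by_contra hxQ
      exact hx (by simp [hfsupp x hxQ])
  obtain ⟨M₀, hM₀⟩ := hφbd
  set M := max M₀ 1 with hMd
  have hM : 0 < M := zero_lt_one.trans_le (le_max_right _ _)
  -- Normalise `φ` to be bounded by one.
  set φ' : E n → ℝ := fun x => M⁻¹ * φ x with hφ'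
  have hφφ' : φ = fun x => M * φ' x := by
    ext x; simp only [hφ']; rw [mul_inv_cancel_left₀ hM.ne']
  have hφb : ∀ x, |φ' x| ≤ 1 := fun x => by
    simp only [hφ']
    rw [abs_mul, abs_of_pos (inv_pos.2 hM), inv_mul_le_iff₀ hM, mul_one]
    exact (hM₀ x).trans (le_max_left _ _)
  have hφL : LL R φ' := LL.of_bdd hR (hφm.const_mul _) hφb fun x hx => by
    simp [hφ', hφsupp x (hnQ x hx)]
  obtain ⟨g, hgm, hgi, hg⟩ := Tk_limit hG hf
  obtain ⟨γ, hγm, hγi, hγ⟩ := Tk_limit hG hφL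
  obtain ⟨i1, i2, h⟩ := pairing_limits hG hf hφL hφb hgi hg hγm hγi hγ
  have e1 : (fun x => M * (g x * φ' x)) =ᵐ[volume] fun x => Tsing Ω f x * φ x := by
    filter_upwards [Tk_tendsto_ae hG hf hgm hgi hg] with x hx
    by_cases hxR : R ≤ ‖x‖
    · rw [hφsupp x (hnQ x hxR), hφL.supp x hxR]; simp
    · have : Tsing Ω f x = g x := by
        unfold Tsing
        simp_rw [Teps_eq_Tk]
        exact (hx (by linarith)).limUnder_eq
      rw [this, hφφ']; ring
  have e2 : (fun x => M * (f x * γ x)) =ᵐ[volume] fun x => f x * Tsing Ω φ x := by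
    filter_upwards [Tk_tendsto_ae hG hφL hγm hγi hγ] with x hx
    by_cases hxR : R ≤ ‖x‖
    · rw [hf.supp x hxR]; simp
    · have : Tsing Ω φ x = M * γ x := by
        unfold Tsing
        simp_rw [Teps_eq_Tk]
        rw [hφφ']
        simp_rw [Tk_const_mul]
        exact ((hx (by linarith)).const_mul M).limUnder_eq
      rw [this]; ring
  refine ⟨(i1.const_mul M).congr e1, (i2.const_mul M).congr e2, ?_⟩
  rw [← integral_congr_ae e1, ← integral_congr_ae e2, integral_const_mul, integral_const_mul, h,
    mul_neg]

end VarExp
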